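/- arXiv:2109.04613 — 3 statements merged into one kernel-verified Lean document; each statement's English description precedes it below -/
import Mathlib

section
/- Let R be a commutative noetherian ring with identity, a an ideal of R, and n ∈ {0, 1}. Let M be a non-zero finitely generated R-module and t a non-negative integer such that the local cohomology module H^i_a(M) is FD_{≤ n} for every i < t. Then Ext^j_R(R/a, H^t_a(M)) is a finitely generated R-module for every j ≤ n. -/
universe u

open CategoryTheory

/-- `Ext^i_R(R/a, M)` as an `R`-module, for `M : ModuleCat R`. -/
noncomputable def extQuot {R : Type u} [CommRing R] (a : Ideal R) (i : ℕ)
    (M : ModuleCat.{u} R) : ModuleCat.{u} R :=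
  ((Ext R (ModuleCat.{u} R) i).obj (Opposite.op (ModuleCat.of R (R ⧸ a)))).obj M

/-- An `R`-module `M` is `a`-cofinite if `Supp M ⊆ V(a)` and `Ext^i_R(R/a, M)` is a
finitely generated `R`-module for every `i ≥ 0`. -/
def IsCofinite {R : Type u} [CommRing R] (a : Ideal R) (M : ModuleCat.{u} R) : Prop :=
  Module.support R M ⊆ PrimeSpectrum.zeroLocus (a : Set R) ∧
    ∀ i : ℕ, Module.Finite R (extQuot a i M)

section
open CategoryTheory Abelian

namespace OldNew
variable {R : Type u} [CommRing R]

noncomputable section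

abbrev NExt (X Y : ModuleCat.{u} R) (n : ℕ) := Abelian.Ext.{u} X Y n

lemma extMk_zero_inj {X Y : ModuleCat.{u} R} (P : ProjectiveResolution X)
    (f : P.complex.X 0 ⟶ Y) (hf : P.complex.d 1 0 ≫ f = 0)
    (h : P.extMk f 1 rfl hf = 0) : f = 0 := by
  simp only [← P.extEquivCohomologyClass.apply_eq_iff_eq,
    ProjectiveResolution.extEquivCohomologyClass_extMk,
    ProjectiveResolution.extEquivCohomologyClass_zero,
    CochainComplex.HomComplex.CohomologyClass.mk_eq_zero_iff] at h
  rw [CochainComplex.HomComplex.Cocycle.toSingleMk_mem_coboundaries_iff _ _ _ _ _ 1 (by simp)] at h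
  obtain ⟨g, hg⟩ := h
  have : g = 0 := by
    apply Limits.IsZero.eq_of_src
    exact CochainComplex.isZero_of_isStrictlyLE _ 0 1
  subst this
  simpa using hg.symm

lemma smul_extMk {X Y : ModuleCat.{u} R} (P : ProjectiveResolution X) {n : ℕ} (r : R)
    (f : P.complex.X n ⟶ Y) (m : ℕ) (hm : n + 1 = m) (hf : P.complex.d m n ≫ f = 0) :
    r • P.extMk f m hm hf = P.extMk (r • f) m hm (by simp [hf]) := by
  rw [Abelian.Ext.smul_eq_comp_mk₀, ProjectiveResolution.extMk_comp_mk₀]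
  congr 1

abbrev KX {X : ModuleCat.{u} R} (P : ProjectiveResolution X) (Y : ModuleCat.{u} R) :
    CochainComplex (ModuleCat.{u} R) ℕ := P.complex.linearYonedaObj R Y

/-- the underlying cocycle -/
def coc {X : ModuleCat.{u} R} (P : ProjectiveResolution X) (Y : ModuleCat.{u} R) (n : ℕ) :
    (KX P Y).cycles n →ₗ[R] (P.complex.X n ⟶ Y) := ((KX P Y).iCycles n).hom

lemma coc_inj {X : ModuleCat.{u} R} (P : ProjectiveResolution X) (Y : ModuleCat.{u} R) (n : ℕ) :
    Function.Injective (coc P Y n) :=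
  (ModuleCat.mono_iff_injective _).1 (inferInstance : Mono ((KX P Y).iCycles n))

lemma d_coc {X : ModuleCat.{u} R} (P : ProjectiveResolution X) (Y : ModuleCat.{u} R) (n : ℕ)
    (z : (KX P Y).cycles n) : P.complex.d (n+1) n ≫ coc P Y n z = 0 := by
  have := congrArg (fun φ => φ.hom z) ((KX P Y).iCycles_d n (n+1))
  exact this

lemma coc_surj {X : ModuleCat.{u} R} (P : ProjectiveResolution X) (Y : ModuleCat.{u} R) (n : ℕ)
    (f : P.complex.X n ⟶ Y) (hf : P.complex.d (n+1) n ≫ f = 0) :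
    ∃ z, coc P Y n z = f := by
  have h := (KX P Y).cyclesIsKernel n (n+1) (by simp)
  have hk : (ShortComplex.mk ((KX P Y).iCycles n) ((KX P Y).d n (n+1)) ((KX P Y).iCycles_d _ _)).Exact :=
    ShortComplex.exact_of_f_is_kernel _ h
  rw [ShortComplex.moduleCat_exact_iff] at hk
  exact hk f hf

lemma π_eq_zero_iff {X : ModuleCat.{u} R} (P : ProjectiveResolution X) (Y : ModuleCat.{u} R)
    (n : ℕ) (z : (KX P Y).cycles n) :
    ((KX P Y).homologyπ n).hom z = 0 ↔ ∃ w, ((KX P Y).toCycles ((ComplexShape.up ℕ).prev n) n).hom w = z := by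
  have h := (KX P Y).homologyIsCokernel ((ComplexShape.up ℕ).prev n) n rfl
  have hk : (ShortComplex.mk ((KX P Y).toCycles ((ComplexShape.up ℕ).prev n) n) ((KX P Y).homologyπ n) (by simp)).Exact :=
    ShortComplex.exact_of_g_is_cokernel _ h
  rw [ShortComplex.moduleCat_exact_iff] at hk
  constructor
  · exact hk z
  · rintro ⟨w, rfl⟩
    have := congrArg (fun φ => φ.hom w) ((KX P Y).toCycles_comp_homologyπ ((ComplexShape.up ℕ).prev n) n)
    exact this

def toNew {X : ModuleCat.{u} R} (P : ProjectiveResolution X) (Y : ModuleCat.{u} R) (n : ℕ) :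
    (KX P Y).cycles n →ₗ[R] NExt X Y n where
  toFun z := P.extMk (coc P Y n z) (n+1) rfl (d_coc P Y n z)
  map_add' z w := by rw [ProjectiveResolution.add_extMk]; congr 1; simp
  map_smul' r z := by rw [RingHom.id_apply, smul_extMk]; congr 1; simp

lemma toNew_surj {X : ModuleCat.{u} R} (P : ProjectiveResolution X) (Y : ModuleCat.{u} R) (n : ℕ) :
    Function.Surjective (toNew P Y n) := by
  intro x
  obtain ⟨f, hf, rfl⟩ := P.extMk_surjective x (n+1) rfl
  obtain ⟨z, rfl⟩ := coc_surj P Y n f hf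
  exact ⟨z, rfl⟩

lemma coc_toCycles {X : ModuleCat.{u} R} (P : ProjectiveResolution X) (Y : ModuleCat.{u} R)
    (m n : ℕ) (w : P.complex.X m ⟶ Y) :
    coc P Y n (((KX P Y).toCycles m n).hom w) = P.complex.d n m ≫ w := by
  have := congrArg (fun φ => φ.hom w) ((KX P Y).toCycles_i m n)
  exact this

lemma toNew_eq_zero_iff {X : ModuleCat.{u} R} (P : ProjectiveResolution X) (Y : ModuleCat.{u} R)
    (n : ℕ) (z : (KX P Y).cycles n) :
    toNew P Y n z = 0 ↔ ((KX P Y).homologyπ n).hom z = 0 := by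
  rw [π_eq_zero_iff]
  cases n with
  | zero =>
    constructor
    · intro h
      have : z = 0 := coc_inj P Y 0 (by rw [map_zero]; exact extMk_zero_inj P _ (d_coc P Y 0 z) h)
      exact ⟨0, by rw [this, map_zero]⟩
    · rintro ⟨w, rfl⟩
      have : ((KX P Y).toCycles ((ComplexShape.up ℕ).prev 0) 0).hom w = 0 := by
        apply coc_inj P Y 0
        rw [map_zero]
        refine (coc_toCycles P Y _ _ w).trans ?_
        rw [P.complex.shape _ _ (by simp)]
        exact Limits.zero_comp
      rw [this, map_zero]
  | succ n =>
    have hp : (ComplexShape.up ℕ).prev (n+1) = n := by simp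
    rw [hp]
    refine (ProjectiveResolution.extMk_eq_zero_iff (R := P) _ _ rfl (d_coc P Y (n+1) z) n rfl).trans ?_
    constructor
    · rintro ⟨g, hg⟩
      exact ⟨g, coc_inj P Y _ ((coc_toCycles P Y _ _ g).trans hg)⟩
    · rintro ⟨w, rfl⟩
      exact ⟨w, (coc_toCycles P Y _ _ w).symm⟩

/-- the comparison. -/
def oldC {X : ModuleCat.{u} R} (P : ProjectiveResolution X) (Y : ModuleCat.{u} R) (n : ℕ) :
    (KX P Y).cycles n →ₗ[R] ((_root_.Ext R (ModuleCat.{u} R) n).obj (Opposite.op X)).obj Y :=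
  ((KX P Y).homologyπ n ≫ (P.isoExt (R := R) n Y).inv).hom

lemma oldC_surj {X : ModuleCat.{u} R} (P : ProjectiveResolution X) (Y : ModuleCat.{u} R) (n : ℕ) :
    Function.Surjective (oldC P Y n) :=
  (ModuleCat.epi_iff_surjective _).1 (inferInstance : Epi ((KX P Y).homologyπ n ≫ (P.isoExt (R := R) n Y).inv))

lemma ker_eq {X : ModuleCat.{u} R} (P : ProjectiveResolution X) (Y : ModuleCat.{u} R) (n : ℕ) :
    LinearMap.ker (oldC P Y n) = LinearMap.ker (toNew P Y n) := by
  ext z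
  rw [LinearMap.mem_ker, LinearMap.mem_ker, toNew_eq_zero_iff]
  have hi : Function.Injective (P.isoExt (R := R) n Y).inv.hom :=
    (ModuleCat.mono_iff_injective _).1 inferInstance
  change (P.isoExt (R := R) n Y).inv.hom (((KX P Y).homologyπ n).hom z) = 0 ↔ _
  rw [map_eq_zero_iff _ hi]

/-- linear equivalence between the old and the new Ext. -/
def oldNew {X : ModuleCat.{u} R} (P : ProjectiveResolution X) (Y : ModuleCat.{u} R) (n : ℕ) :
    (((_root_.Ext R (ModuleCat.{u} R) n).obj (Opposite.op X)).obj Y : Type u) ≃ₗ[R] NExt X Y n :=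
  ((oldC P Y n).quotKerEquivOfSurjective (oldC_surj P Y n)).symm ≪≫ₗ
    (Submodule.quotEquivOfEq _ _ (ker_eq P Y n)) ≪≫ₗ
    ((toNew P Y n).quotKerEquivOfSurjective (toNew_surj P Y n))

lemma oldNew_oldC {X : ModuleCat.{u} R} (P : ProjectiveResolution X) (Y : ModuleCat.{u} R) (n : ℕ)
    (z : (KX P Y).cycles n) : oldNew P Y n (oldC P Y n z) = toNew P Y n z := by
  have : ((oldC P Y n).quotKerEquivOfSurjective (oldC_surj P Y n)).symm (oldC P Y n z) =
      Submodule.Quotient.mk z := by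
    rw [LinearEquiv.symm_apply_eq]; rfl
  simp only [oldNew, LinearEquiv.trans_apply, this]
  rfl

end
end OldNew
end

section
open CategoryTheory Abelian
namespace OldNew
variable {R : Type u} [CommRing R]
noncomputable section

def psi {X X' : ModuleCat.{u} R} {P : ProjectiveResolution X} {P' : ProjectiveResolution X'}
    (φ : P'.complex ⟶ P.complex) (Y : ModuleCat.{u} R) : KX P Y ⟶ KX P' Y where
  f n := (((linearYoneda R (ModuleCat.{u} R)).obj Y).rightOp.map (φ.f n)).unop
  comm' i j hij := by
    have := (((((linearYoneda R (ModuleCat.{u} R)).obj Y).rightOp.mapHomologicalComplex _).map φ).comm j i)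
    exact congrArg Quiver.Hom.unop this.symm

lemma isoExt_nat {X X' Y : ModuleCat.{u} R} (P : ProjectiveResolution X)
    (P' : ProjectiveResolution X') (g : X' ⟶ X) (n : ℕ) (φ : P'.complex ⟶ P.complex)
    (comm : φ.f 0 ≫ P.π.f 0 = P'.π.f 0 ≫ g) :
    (P.isoExt (R := R) n Y).inv ≫ ((_root_.Ext R (ModuleCat.{u} R) n).map g.op).app Y =
      HomologicalComplex.homologyMap (psi φ Y) n ≫ (P'.isoExt (R := R) n Y).inv := by
  have h1 := ProjectiveResolution.isoLeftDerivedObj_hom_naturality g P' P φ comm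
    (((linearYoneda R (ModuleCat.{u} R)).obj Y).rightOp) n
  have h2 := congrArg Quiver.Hom.unop (HomologicalComplex.homologyOp_hom_naturality (psi φ Y) n)
  have h3 := congrArg Quiver.Hom.unop h1
  have e1 : (P.isoExt (R := R) n Y).inv = (HomologicalComplex.homologyUnop _ n).hom ≫
    (P.isoLeftDerivedObj (((linearYoneda R (ModuleCat.{u} R)).obj Y).rightOp) n).hom.unop := rfl
  have e2 : (P'.isoExt (R := R) n Y).inv = (HomologicalComplex.homologyUnop _ n).hom ≫
    (P'.isoLeftDerivedObj (((linearYoneda R (ModuleCat.{u} R)).obj Y).rightOp) n).hom.unop := rfl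
  have e3 : ((_root_.Ext R (ModuleCat.{u} R) n).map g.op).app Y =
    (((((linearYoneda R (ModuleCat.{u} R)).obj Y).rightOp).leftDerived n).map g).unop := rfl
  rw [e1, e2, e3]
  erw [Category.assoc]
  refine (congrArg (fun t => (HomologicalComplex.homologyUnop _ n).hom ≫ t) h3).trans ?_
  have h2' : (HomologicalComplex.homologyUnop _ n).hom ≫
    (HomologicalComplex.homologyMap ((((linearYoneda R (ModuleCat.{u} R)).obj Y).rightOp.mapHomologicalComplex _).map φ) n).unop = 
    HomologicalComplex.homologyMap (psi φ Y) n ≫ (HomologicalComplex.homologyUnop _ n).hom := h2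
  exact (Category.assoc _ _ _).symm.trans ((congrArg (fun t => t ≫
    (P'.isoLeftDerivedObj (((linearYoneda R (ModuleCat.{u} R)).obj Y).rightOp) n).hom.unop)
      h2').trans (Category.assoc _ _ _))

lemma oldC_nat {X X' Y : ModuleCat.{u} R} (P : ProjectiveResolution X)
    (P' : ProjectiveResolution X') (g : X' ⟶ X) (n : ℕ) (φ : P'.complex ⟶ P.complex)
    (comm : φ.f 0 ≫ P.π.f 0 = P'.π.f 0 ≫ g) (z : (KX P Y).cycles n) :
    (((_root_.Ext R (ModuleCat.{u} R) n).map g.op).app Y).hom (oldC P Y n z) =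
      oldC P' Y n ((HomologicalComplex.cyclesMap (psi φ Y) n).hom z) := by
  have h : ((KX P Y).homologyπ n ≫ (P.isoExt (R := R) n Y).inv) ≫
      ((_root_.Ext R (ModuleCat.{u} R) n).map g.op).app Y =
      HomologicalComplex.cyclesMap (psi φ Y) n ≫
        ((KX P' Y).homologyπ n ≫ (P'.isoExt (R := R) n Y).inv) := by
    rw [Category.assoc, isoExt_nat P P' g n φ comm, ← Category.assoc, ← Category.assoc,
      HomologicalComplex.homologyπ_naturality]
  exact congrArg (fun t => t.hom z) h

lemma coc_nat {X X' Y : ModuleCat.{u} R} (P : ProjectiveResolution X)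
    (P' : ProjectiveResolution X') (n : ℕ) (φ : P'.complex ⟶ P.complex) (z : (KX P Y).cycles n) :
    coc P' Y n ((HomologicalComplex.cyclesMap (psi φ Y) n).hom z) = φ.f n ≫ coc P Y n z :=
  congrArg (fun t => t.hom z) (HomologicalComplex.cyclesMap_i (psi φ Y) n)

lemma oldNew_nat {X X' Y : ModuleCat.{u} R} (P : ProjectiveResolution X)
    (P' : ProjectiveResolution X') (g : X' ⟶ X) (n : ℕ)
    (x : ((_root_.Ext R (ModuleCat.{u} R) n).obj (Opposite.op X)).obj Y) :
    oldNew P' Y n ((((_root_.Ext R (ModuleCat.{u} R) n).map g.op).app Y).hom x) =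
      (Abelian.Ext.mk₀ g).comp (oldNew P Y n x) (zero_add n) := by
  obtain ⟨z, rfl⟩ := oldC_surj P Y n x
  let φ := ProjectiveResolution.lift g P' P
  have comm : φ.f 0 ≫ P.π.f 0 = P'.π.f 0 ≫ g := ProjectiveResolution.lift_commutes_zero g P' P
  rw [oldC_nat P P' g n φ comm, oldNew_oldC, oldNew_oldC]
  refine Eq.trans ?_ (ProjectiveResolution.mk₀_comp_extMk (R := P) (coc P Y n z) (n+1) rfl (d_coc P Y n z)
    (R' := P') (g := g) ⟨φ, by simpa using comm⟩).symm
  change P'.extMk _ (n+1) rfl (d_coc P' Y n _) = _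
  congr 1
  exact coc_nat P P' n φ z

end
end OldNew
end

section
open CategoryTheory Abelian
namespace OldNew
variable {R : Type u} [CommRing R]
noncomputable section

abbrev qq (a : Ideal R) (k : ℕ) : ModuleCat.{u} R := ModuleCat.of R (R ⧸ a ^ k)

def pr (a : Ideal R) {k s : ℕ} (h : k ≤ s) : qq a s ⟶ qq a k :=
  ModuleCat.ofHom (Submodule.mapQ _ _ LinearMap.id (Ideal.pow_le_pow_right h))

lemma pr_self (a : Ideal R) (k : ℕ) : pr a (le_refl k) = 𝟙 _ := by
  ext x
  rfl

lemma pr_comp (a : Ideal R) {k s t : ℕ} (h : k ≤ s) (h' : s ≤ t) :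
    pr a h' ≫ pr a h = pr a (h.trans h') := by
  ext x
  rfl

abbrev DG (a : Ideal R) (i : ℕ) (M : ModuleCat.{u} R) (k : ℕ) : Type u := NExt (qq a k) M i

def res (a : Ideal R) (i : ℕ) (M : ModuleCat.{u} R) (k s : ℕ) (h : k ≤ s) :
    DG a i M k →ₗ[R] DG a i M s :=
  Abelian.Ext.precompOfLinear (Abelian.Ext.mk₀ (pr a h)) R M (zero_add i)

lemma res_apply (a : Ideal R) (i : ℕ) (M : ModuleCat.{u} R) (k s : ℕ) (h : k ≤ s)
    (x : DG a i M k) : res a i M k s h x = (Abelian.Ext.mk₀ (pr a h)).comp x (zero_add i) := rfl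

instance (a : Ideal R) (i : ℕ) (M : ModuleCat.{u} R) :
    DirectedSystem (DG a i M) (fun k s h => res a i M k s h) where
  map_self k x := by
    change res a i M k k _ x = x
    rw [res_apply, pr_self, Abelian.Ext.mk₀_id_comp]
  map_map k s t h h' x := by
    change res a i M _ _ _ (res a i M _ _ _ x) = res a i M _ _ _ x
    rw [res_apply, res_apply, res_apply, Abelian.Ext.mk₀_comp_mk₀_assoc, pr_comp]

abbrev DL (a : Ideal R) (i : ℕ) (M : ModuleCat.{u} R) : Type u :=
  Module.DirectLimit (DG a i M) (res a i M)

abbrev PR (X : ModuleCat.{u} R) : ProjectiveResolution X := projectiveResolution X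

open localCohomology Limits in
theorem lc_equiv (a : Ideal R) (i : ℕ) (M : ModuleCat.{u} R) :
    Nonempty (((localCohomology a i).obj M) ≃ₗ[R] DL a i M) := by
  let F := diagram (idealPowersDiagram a) i
  let c : Cocone F := colimit.cocone F
  let hc : IsColimit c := colimit.isColimit F
  let ev := ((evaluation (ModuleCat.{u} R) (ModuleCat.{u} R)).obj M)
  let c' := ev.mapCocone c
  let hc' : IsColimit c' := isColimitOfPreserves ev hc
  let lev (k : ℕ) : DG a i M k ≃ₗ[R] (F ⋙ ev).obj (Opposite.op (Opposite.op k)) :=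
    (oldNew (PR (qq a k)) M i).symm
  let f (k : ℕ) : DG a i M k →ₗ[R] c'.pt :=
    (c'.ι.app (Opposite.op (Opposite.op k))).hom ∘ₗ (lev k).toLinearMap
  have hlev (k s : ℕ) (h : k ≤ s) (x : DG a i M k) :
      lev s (res a i M k s h x) =
        ((F ⋙ ev).map (homOfLE h).op.op).hom (lev k x) := by
    obtain ⟨y, rfl⟩ := (lev k).symm.surjective x
    rw [← (lev s).symm.injective.eq_iff, LinearEquiv.symm_apply_apply, LinearEquiv.apply_symm_apply]
    exact (oldNew_nat (Y := M) (PR (qq a k)) (PR (qq a s)) (pr a h) i y).symm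
  have hf (k s : ℕ) (h : k ≤ s) (x : DG a i M k) : f s (res a i M k s h x) = f k x := by
    change (c'.ι.app (Opposite.op (Opposite.op s))).hom (lev s (res a i M k s h x)) =
      (c'.ι.app (Opposite.op (Opposite.op k))).hom (lev k x)
    rw [hlev]
    exact congrArg (fun t => t.hom (lev k x)) (c'.w (homOfLE h).op.op)
  haveI : PreservesFilteredColimitsOfSize.{0, 0} (forget (ModuleCat.{u} R)) :=
    preservesSmallestFilteredColimits_of_preservesFilteredColimits _
  haveI : PreservesColimit (F ⋙ ev) (forget (ModuleCat.{u} R)) :=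
    (PreservesFilteredColimitsOfSize.preserves_filtered_colimits _).preservesColimit
  let φ : DL a i M →ₗ[R] c'.pt := Module.DirectLimit.lift R ℕ _ _ f hf
  have hsurj : Function.Surjective φ := by
    intro y
    obtain ⟨j, x, hx⟩ := Concrete.isColimit_exists_rep (F ⋙ ev) hc' y
    refine ⟨Module.DirectLimit.of R ℕ _ _ j.unop.unop ((lev j.unop.unop).symm x), ?_⟩
    rw [← hx]
    refine (Module.DirectLimit.lift_of f hf _).trans ?_
    change (c'.ι.app _).hom (lev _ ((lev _).symm x)) = _
    rw [LinearEquiv.apply_symm_apply]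
  have hinj : Function.Injective φ := by
    rw [injective_iff_map_eq_zero]
    intro x hx
    obtain ⟨k, x, rfl⟩ := Module.DirectLimit.exists_of x
    have hx' : (c'.ι.app (Opposite.op (Opposite.op k))) (lev k x) =
      (c'.ι.app (Opposite.op (Opposite.op k))) 0 := by
      rw [map_zero]
      exact (Module.DirectLimit.lift_of f hf _).symm.trans hx
    rw [Concrete.isColimit_rep_eq_iff_exists (F ⋙ ev) hc'] at hx'
    obtain ⟨s, g, g', e⟩ := hx'
    have h : k ≤ s.unop.unop := leOfHom g.unop.unop
    have : res a i M k s.unop.unop h x = 0 := by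
      apply (lev s.unop.unop).injective
      rw [map_zero, hlev]
      rw [map_zero] at e
      exact e
    rw [← Module.DirectLimit.of_f (hij := h), this, map_zero]
  exact ⟨(LinearEquiv.ofBijective φ ⟨hinj, hsurj⟩).symm⟩

end
end OldNew
end

section
open CategoryTheory Abelian
namespace OldNew
variable {R : Type u} [CommRing R]
noncomputable section

/-- Ext with second variable an unbundled module. -/
abbrev EX (X : ModuleCat.{u} R) (Y : Type u) [AddCommGroup Y] [Module R Y] (j : ℕ) : Type u :=
  NExt X (ModuleCat.of R Y) j

section
variable (X : ModuleCat.{u} R)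
variable {A B C : Type u} [AddCommGroup A] [Module R A] [AddCommGroup B] [Module R B]
  [AddCommGroup C] [Module R C]

def em (j : ℕ) (f : A →ₗ[R] B) : EX X A j →ₗ[R] EX X B j :=
  Abelian.Ext.postcompOfLinear (Abelian.Ext.mk₀ (ModuleCat.ofHom f)) R X (add_zero j)

lemma em_apply (j : ℕ) (f : A →ₗ[R] B) (x : EX X A j) :
    em X j f x = x.comp (Abelian.Ext.mk₀ (ModuleCat.ofHom f)) (add_zero j) := rfl

lemma em_comp (j : ℕ) (f : A →ₗ[R] B) (g : B →ₗ[R] C) (x : EX X A j) :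
    em X j g (em X j f x) = em X j (g ∘ₗ f) x := by
  simp only [em_apply, ModuleCat.ofHom_comp, ← Abelian.Ext.mk₀_comp_mk₀,
    Abelian.Ext.comp_assoc_of_third_deg_zero]

lemma em_id (j : ℕ) (x : EX X A j) : em X j LinearMap.id x = x := by
  rw [em_apply]
  exact Abelian.Ext.comp_mk₀_id x

lemma em_smul_id (j : ℕ) (r : R) (x : EX X A j) :
    em X j (r • LinearMap.id) x = r • x := by
  rw [em_apply, Abelian.Ext.smul_eq_comp_mk₀]
  rfl

def sc {f : A →ₗ[R] B} {g : B →ₗ[R] C} (h : Function.Exact f g) : ShortComplex (ModuleCat.{u} R) :=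
  ShortComplex.mk (ModuleCat.ofHom f) (ModuleCat.ofHom g) (by
    ext x; exact h.apply_apply_eq_zero x)

lemma sc_exact {f : A →ₗ[R] B} {g : B →ₗ[R] C} (h : Function.Exact f g)
    (hf : Function.Injective f) (hg : Function.Surjective g) : (sc h).ShortExact :=
  { exact := (ShortComplex.moduleCat_exact_iff _).2 (fun x hx => (h x).1 hx)
    mono_f := (ModuleCat.mono_iff_injective _).2 hf
    epi_g := (ModuleCat.epi_iff_surjective _).2 hg }

variable {f : A →ₗ[R] B} {g : B →ₗ[R] C} (h : Function.Exact f g)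
    (hf : Function.Injective f) (hg : Function.Surjective g)

/-- the extension class -/
def ecl : NExt (ModuleCat.of R C) (ModuleCat.of R A) 1 := (sc_exact h hf hg).extClass

def dl (j : ℕ) : EX X C j →ₗ[R] EX X A (j+1) :=
  Abelian.Ext.postcompOfLinear (ecl h hf hg) R X rfl

lemma dl_apply (j : ℕ) (x : EX X C j) :
    dl X h hf hg j x = x.comp (ecl h hf hg) rfl := rfl

include h hf hg in
lemma ex_mid (j : ℕ) : Function.Exact (em X j f) (em X j g) := by
  intro x
  constructor
  · intro hx
    exact Abelian.Ext.covariant_sequence_exact₂ X (sc_exact h hf hg) x hx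
  · rintro ⟨y, rfl⟩
    rw [em_comp, h.linearMap_comp_eq_zero, em_apply]
    simp

lemma ex_right (j : ℕ) : Function.Exact (em X j g) (dl X h hf hg j) := by
  intro x
  constructor
  · intro hx
    exact Abelian.Ext.covariant_sequence_exact₃ X (sc_exact h hf hg) x rfl hx
  · rintro ⟨y, rfl⟩
    rw [dl_apply, em_apply]
    have : (Abelian.Ext.mk₀ (ModuleCat.ofHom g)).comp (ecl h hf hg) (zero_add 1) = 0 :=
      (sc_exact h hf hg).comp_extClass
    rw [Abelian.Ext.comp_assoc_of_second_deg_zero]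
    rw [this, Abelian.Ext.comp_zero]

lemma ex_left (j : ℕ) : Function.Exact (dl X h hf hg j) (em X (j+1) f) := by
  intro x
  constructor
  · intro hx
    exact Abelian.Ext.covariant_sequence_exact₁ X (sc_exact h hf hg) x hx rfl
  · rintro ⟨y, rfl⟩
    rw [dl_apply, em_apply]
    have : (ecl h hf hg).comp (Abelian.Ext.mk₀ (ModuleCat.ofHom f)) (add_zero 1) = 0 :=
      (sc_exact h hf hg).extClass_comp
    rw [Abelian.Ext.comp_assoc_of_third_deg_zero]
    rw [this, Abelian.Ext.comp_zero]

lemma em_zero_inj (f : A →ₗ[R] B) (hf : Function.Injective f) : Function.Injective (em X 0 f) := by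
  rw [injective_iff_map_eq_zero]
  intro x hx
  obtain ⟨φ, rfl⟩ := Abelian.Ext.mk₀_bijective (C := ModuleCat.{u} R) X (ModuleCat.of R A) |>.2 x
  rw [em_apply, Abelian.Ext.mk₀_comp_mk₀, Abelian.Ext.mk₀_eq_zero_iff] at hx
  have : Mono (ModuleCat.ofHom f) := (ModuleCat.mono_iff_injective _).2 hf
  rw [Abelian.Ext.mk₀_eq_zero_iff]
  exact (cancel_mono (ModuleCat.ofHom f)).1 (by rw [hx, Limits.zero_comp])

end

/-- evaluation in degree zero -/
def ev0 (I : Ideal R) (Y : Type u) [AddCommGroup Y] [Module R Y] :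
    EX (ModuleCat.of R (R ⧸ I)) Y 0 →ₗ[R] Y :=
  (LinearMap.applyₗ (Submodule.Quotient.mk 1 : R ⧸ I)) ∘ₗ
    (ModuleCat.homLinearEquiv (S := R)).toLinearMap ∘ₗ
      (Abelian.Ext.linearEquiv₀ (R := R)).toLinearMap

lemma ev0_mk₀ (I : Ideal R) (Y : Type u) [AddCommGroup Y] [Module R Y] (φ : (R ⧸ I) →ₗ[R] Y) :
    ev0 I Y (Abelian.Ext.mk₀ (ModuleCat.ofHom φ)) = φ (Submodule.Quotient.mk 1) := by
  have : (Abelian.Ext.linearEquiv₀ (R := R)) (Abelian.Ext.mk₀ (ModuleCat.ofHom φ)) =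
    ModuleCat.ofHom φ := by
      apply (Abelian.Ext.mk₀_bijective (C := ModuleCat.{u} R) _ _).1
      rw [Abelian.Ext.mk₀_linearEquiv₀_apply]
  simp only [ev0, LinearMap.comp_apply, LinearEquiv.coe_coe, this]
  rfl

lemma exists_mk₀ (I : Ideal R) {Y : Type u} [AddCommGroup Y] [Module R Y]
    (x : EX (ModuleCat.of R (R ⧸ I)) Y 0) :
    ∃ φ : (R ⧸ I) →ₗ[R] Y, Abelian.Ext.mk₀ (ModuleCat.ofHom φ) = x := by
  obtain ⟨φ, rfl⟩ := (Abelian.Ext.mk₀_bijective (C := ModuleCat.{u} R) _ _).2 x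
  exact ⟨φ.hom, rfl⟩

lemma ev0_inj (I : Ideal R) (Y : Type u) [AddCommGroup Y] [Module R Y] :
    Function.Injective (ev0 I Y) := by
  rw [injective_iff_map_eq_zero]
  intro x hx
  obtain ⟨φ, rfl⟩ := exists_mk₀ I x
  rw [ev0_mk₀] at hx
  have : φ = 0 := by
    refine Submodule.linearMap_qext _ ?_
    ext
    exact hx
  rw [this]
  exact (Abelian.Ext.mk₀_eq_zero_iff _).2 rfl

lemma ev0_range (I : Ideal R) (Y : Type u) [AddCommGroup Y] [Module R Y] (y : Y) :
    y ∈ LinearMap.range (ev0 I Y) ↔ ∀ r ∈ I, r • y = 0 := by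
  constructor
  · rintro ⟨x, rfl⟩ r hr
    obtain ⟨φ, rfl⟩ := exists_mk₀ I x
    rw [ev0_mk₀, ← map_smul]
    have : r • (Submodule.Quotient.mk 1 : R ⧸ I) = 0 := by
      rw [← Submodule.Quotient.mk_smul, Submodule.Quotient.mk_eq_zero]
      simpa using hr
    rw [this, map_zero]
  · intro h
    refine ⟨Abelian.Ext.mk₀ (ModuleCat.ofHom (Submodule.liftQ I (LinearMap.toSpanSingleton R Y y) ?_)), ?_⟩
    · intro r hr
      exact h r hr
    · rw [ev0_mk₀]
      exact one_smul R y

lemma ev0_nat (I : Ideal R) {Y Z : Type u} [AddCommGroup Y] [Module R Y] [AddCommGroup Z]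
    [Module R Z] (f : Y →ₗ[R] Z) (x : EX (ModuleCat.of R (R ⧸ I)) Y 0) :
    ev0 I Z (em _ 0 f x) = f (ev0 I Y x) := by
  obtain ⟨φ, rfl⟩ := exists_mk₀ I x
  rw [em_apply, Abelian.Ext.mk₀_comp_mk₀, ← ModuleCat.ofHom_comp, ev0_mk₀, ev0_mk₀]
  rfl

lemma kill (I : Ideal R) (Y : Type u) [AddCommGroup Y] [Module R Y] (j : ℕ) (r : R) (hr : r ∈ I)
    (x : EX (ModuleCat.of R (R ⧸ I)) Y j) : r • x = 0 := by
  have h : x = (Abelian.Ext.mk₀ (𝟙 (ModuleCat.of R (R ⧸ I)))).comp x (zero_add j) :=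
    (Abelian.Ext.mk₀_id_comp x).symm
  rw [h, ← Abelian.Ext.smul_comp, ← Abelian.Ext.mk₀_smul]
  have : r • 𝟙 (ModuleCat.of R (R ⧸ I)) = 0 := by
    ext
    change r • (Submodule.Quotient.mk 1 : R ⧸ I) = 0
    rw [← Submodule.Quotient.mk_smul, Submodule.Quotient.mk_eq_zero]
    simpa using hr
  rw [this, (Abelian.Ext.mk₀_eq_zero_iff _).2 rfl, Abelian.Ext.zero_comp]

lemma EX_inj (X : ModuleCat.{u} R) (Y : Type u) [AddCommGroup Y] [Module R Y] [Module.Injective R Y]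
    (j : ℕ) (x : EX X Y (j+1)) : x = 0 := by
  have : Injective (ModuleCat.of R Y) := Module.injective_object_of_injective_module R Y
  exact Abelian.Ext.eq_zero_of_injective x

end
end OldNew
end

section
open CategoryTheory Abelian
namespace OldNew
variable {R : Type u} [CommRing R]
noncomputable section

/-- the `a`-power torsion submodule -/
def Gam (a : Ideal R) (Y : Type u) [AddCommGroup Y] [Module R Y] : Submodule R Y where
  carrier := {y | ∃ k : ℕ, ∀ r ∈ a ^ k, r • y = 0}
  zero_mem' := ⟨0, fun r _ => smul_zero r⟩
  add_mem' := by
    rintro x y ⟨k, hk⟩ ⟨s, hs⟩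
    refine ⟨max k s, fun r hr => ?_⟩
    rw [smul_add, hk r (Ideal.pow_le_pow_right (le_max_left k s) hr),
      hs r (Ideal.pow_le_pow_right (le_max_right k s) hr), add_zero]
  smul_mem' := by
    rintro c x ⟨k, hk⟩
    exact ⟨k, fun r hr => by rw [smul_comm, hk r hr, smul_zero]⟩

lemma mem_Gam {a : Ideal R} {Y : Type u} [AddCommGroup Y] [Module R Y] {y : Y} :
    y ∈ Gam a Y ↔ ∃ k : ℕ, ∀ r ∈ a ^ k, r • y = 0 := Iff.rfl

abbrev DLL (a : Ideal R) (i : ℕ) (Y : Type u) [AddCommGroup Y] [Module R Y] : Type u :=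
  DL a i (ModuleCat.of R Y)

lemma DLL_torsion (a : Ideal R) (i : ℕ) (Y : Type u) [AddCommGroup Y] [Module R Y]
    (x : DLL a i Y) : ∃ k : ℕ, ∀ r ∈ a ^ k, r • x = 0 := by
  obtain ⟨k, x, rfl⟩ := Module.DirectLimit.exists_of x
  refine ⟨k, fun r hr => ?_⟩
  rw [← map_smul]
  have : r • x = 0 := kill (a ^ k) Y i r hr x
  rw [this, map_zero]

section
variable {A B C : Type u} [AddCommGroup A] [Module R A] [AddCommGroup B] [Module R B]
  [AddCommGroup C] [Module R C]

lemma res_em (a : Ideal R) (i k s : ℕ) (h : k ≤ s) (f : A →ₗ[R] B) (x : EX (qq a k) A i) :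
    res a i (ModuleCat.of R B) k s h (em _ i f x) =
      em _ i f (res a i (ModuleCat.of R A) k s h x) := by
  rw [em_apply, em_apply, res_apply, res_apply, Abelian.Ext.comp_assoc_of_third_deg_zero]

variable {f : A →ₗ[R] B} {g : B →ₗ[R] C} (h : Function.Exact f g)
    (hf : Function.Injective f) (hg : Function.Surjective g)

lemma res_dl (a : Ideal R) (i k s : ℕ) (hks : k ≤ s) (x : EX (qq a k) C i) :
    res a (i+1) (ModuleCat.of R A) k s hks (dl _ h hf hg i x) =
      dl _ h hf hg i (res a i (ModuleCat.of R C) k s hks x) := by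
  rw [dl_apply, dl_apply, res_apply, res_apply]
  rw [Abelian.Ext.comp_assoc _ _ _ (zero_add i) rfl (by omega)]

lemma dl_surj [Module.Injective R B] (X : ModuleCat.{u} R) (i : ℕ) :
    Function.Surjective (dl X h hf hg i) := fun y =>
  (ex_left X h hf hg i y).1 (EX_inj _ _ _ _)

lemma dl_inj [Module.Injective R B] (X : ModuleCat.{u} R) (i : ℕ) :
    Function.Injective (dl X h hf hg (i+1)) := by
  rw [injective_iff_map_eq_zero]
  intro x hx
  obtain ⟨y, rfl⟩ := (ex_right X h hf hg (i+1) x).1 hx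
  rw [EX_inj X B i y, map_zero]

include h hf hg in
theorem DLL_shift [Module.Injective R B] (a : Ideal R) (i : ℕ) :
    Nonempty (DLL a (i+1) C ≃ₗ[R] DLL a (i+2) A) := by
  refine ⟨Module.DirectLimit.congr (fun k => LinearEquiv.ofBijective (dl (qq a k) h hf hg (i+1))
    ⟨dl_inj h hf hg _ i, dl_surj h hf hg _ (i+1)⟩) ?_⟩
  intro k s hks
  ext x
  exact (res_dl h hf hg a (i+1) k s hks x).symm

lemma ev0_res (a : Ideal R) (k s : ℕ) (hks : k ≤ s) (x : EX (qq a k) A 0) :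
    ev0 (a ^ s) A (res a 0 (ModuleCat.of R A) k s hks x) = ev0 (a ^ k) A x := by
  obtain ⟨φ, rfl⟩ := exists_mk₀ (a ^ k) x
  rw [res_apply, Abelian.Ext.mk₀_comp_mk₀]
  rw [ev0_mk₀]
  exact ev0_mk₀ (a ^ s) A _

/-- the evaluation map from the direct limit in degree zero -/
def dl0 (a : Ideal R) (A : Type u) [AddCommGroup A] [Module R A] : DLL a 0 A →ₗ[R] A :=
  Module.DirectLimit.lift R ℕ _ _ (fun k => ev0 (a ^ k) A) (fun k s hks x => ev0_res a k s hks x)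

lemma dl0_of (a : Ideal R) (k : ℕ) (x : EX (qq a k) A 0) :
    dl0 a A (Module.DirectLimit.of R ℕ (DG a 0 (ModuleCat.of R A)) (res a 0 (ModuleCat.of R A)) k x)
      = ev0 (a ^ k) A x := Module.DirectLimit.lift_of _ _ _

lemma dl0_inj (a : Ideal R) : Function.Injective (dl0 a A) :=
  Module.DirectLimit.lift_injective _ _ (fun k => ev0_inj (a ^ k) A)

lemma dl0_range (a : Ideal R) : LinearMap.range (dl0 a A) = Gam a A := by
  ext y
  constructor
  · rintro ⟨x, rfl⟩
    obtain ⟨k, x, rfl⟩ := Module.DirectLimit.exists_of x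
    rw [dl0_of]
    exact ⟨k, (ev0_range (a ^ k) A _).1 ⟨x, rfl⟩⟩
  · rintro ⟨k, hk⟩
    obtain ⟨x, hx⟩ := (ev0_range (a ^ k) A y).2 hk
    exact ⟨_, (dl0_of a k x).trans hx⟩

def dl0Equiv (a : Ideal R) (A : Type u) [AddCommGroup A] [Module R A] : DLL a 0 A ≃ₗ[R] Gam a A :=
  (LinearEquiv.ofInjective (dl0 a A) (dl0_inj a)) ≪≫ₗ LinearEquiv.ofEq _ _ (dl0_range a)

lemma dl0Equiv_coe (a : Ideal R) (x : DLL a 0 A) : (dl0Equiv a A x : A) = dl0 a A x := rfl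

/-- connecting map in the limit -/
def DD (a : Ideal R) : DLL a 0 C →ₗ[R] DLL a 1 A :=
  Module.DirectLimit.map (fun k => dl (qq a k) h hf hg 0) (by
    intro k s hks
    ext x
    exact (res_dl h hf hg a 0 k s hks x).symm)

lemma DD_of (a : Ideal R) (k : ℕ) (x : EX (qq a k) C 0) :
    DD h hf hg a (Module.DirectLimit.of R ℕ (DG a 0 (ModuleCat.of R C)) (res a 0 (ModuleCat.of R C)) k x)
      = Module.DirectLimit.of R ℕ (DG a 1 (ModuleCat.of R A)) (res a 1 (ModuleCat.of R A)) k
        (dl (qq a k) h hf hg 0 x) := Module.DirectLimit.map_apply_of _ _ _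

include h hf hg in
theorem DLL_one [Module.Injective R B] (a : Ideal R) :
    Nonempty ((Gam a C ⧸ ((Gam a B).map g).comap (Gam a C).subtype) ≃ₗ[R] DLL a 1 A) := by
  let φ : Gam a C →ₗ[R] DLL a 1 A := DD h hf hg a ∘ₗ (dl0Equiv a C).symm.toLinearMap
  have hs : Function.Surjective φ := by
    refine Function.Surjective.comp (g := DD h hf hg a) ?_ (dl0Equiv a C).symm.surjective
    intro y
    obtain ⟨k, y, rfl⟩ := Module.DirectLimit.exists_of y
    obtain ⟨x, rfl⟩ := dl_surj h hf hg (qq a k) 0 y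
    exact ⟨_, DD_of h hf hg a k x⟩
  have hk : LinearMap.ker φ = ((Gam a B).map g).comap (Gam a C).subtype := by
    ext c
    obtain ⟨x, rfl⟩ := (dl0Equiv a C).surjective c
    rw [LinearMap.mem_ker]
    have e1 : φ (dl0Equiv a C x) = DD h hf hg a x := by
      simp [φ]
    rw [e1]
    constructor
    · intro hx
      obtain ⟨k, x, rfl⟩ := Module.DirectLimit.exists_of x
      rw [DD_of] at hx
      obtain ⟨s, hks, hx⟩ := Module.DirectLimit.of.zero_exact hx
      rw [res_dl h hf hg] at hx
      obtain ⟨y, hy⟩ := (ex_right (qq a s) h hf hg 0 _).1 hx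
      refine ⟨ev0 (a ^ s) B y, ⟨s, (ev0_range (a ^ s) B _).1 ⟨y, rfl⟩⟩, ?_⟩
      rw [← ev0_nat]
      rw [Submodule.subtype_apply, dl0Equiv_coe, dl0_of]
      rw [← ev0_res a k s hks]
      exact congrArg (ev0 (a ^ s) C) hy
    · rintro ⟨b, ⟨k, hb⟩, hbc⟩
      obtain ⟨y, hy⟩ := (ev0_range (a ^ k) B b).2 hb
      have : x = Module.DirectLimit.of R ℕ (DG a 0 (ModuleCat.of R C))
          (res a 0 (ModuleCat.of R C)) k (em (qq a k) 0 g y) := by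
        apply dl0_inj a
        rw [dl0_of, ← dl0Equiv_coe]
        refine hbc.symm.trans ?_
        rw [← hy]
        exact (ev0_nat (a ^ k) g y).symm
      rw [this, DD_of, (ex_right (qq a k) h hf hg 0 _).2 ⟨y, rfl⟩, map_zero]
  exact ⟨(Submodule.quotEquivOfEq _ _ hk.symm) ≪≫ₗ φ.quotKerEquivOfSurjective hs⟩

end


theorem Gam_injective [IsNoetherianRing R] (a : Ideal R) (E : Type u) [AddCommGroup E] [Module R E]
    [Module.Injective R E] : Module.Injective R (Gam a E) := by
  apply Module.Baer.injective
  intro I φ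
  -- a power of `a` kills the image of `φ`
  obtain ⟨k, hk⟩ : ∃ k : ℕ, ∀ r ∈ a ^ k, ∀ x : I, r • φ x = 0 := by
    have hfg : (⊤ : Submodule R I).FG := IsNoetherian.noetherian _
    obtain ⟨S, hS⟩ := hfg
    have h1 : ∀ x : I, ∃ k : ℕ, ∀ r ∈ a ^ k, r • φ x = 0 := by
      intro x
      obtain ⟨k, hk⟩ := (φ x).2
      exact ⟨k, fun r hr => Subtype.ext (hk r hr)⟩
    choose κ hκ using h1
    refine ⟨S.sup κ, fun r hr x => ?_⟩
    have hx : x ∈ Submodule.span R (S : Set I) := hS ▸ Submodule.mem_top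
    induction hx using Submodule.span_induction with
    | mem x h => exact hκ x r (Ideal.pow_le_pow_right (Finset.le_sup h) hr)
    | zero => simp
    | add x y _ _ hx hy => rw [map_add, smul_add, hx, hy, add_zero]
    | smul c x _ hx => rw [map_smul, smul_comm, hx, smul_zero]
  obtain ⟨c, hc⟩ := a.exists_pow_inf_eq_pow_smul (M := R) I
  have hker : ∀ x : I, (x : R) ∈ a ^ (k + c) → φ x = 0 := by
    intro x hx
    have h2 : (x : R) ∈ a ^ (k + c - c) • (a ^ c • ⊤ ⊓ I : Submodule R R) := by
      rw [← hc (k + c) (Nat.le_add_left c k)]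
      exact ⟨by simpa using hx, x.2⟩
    rw [Nat.add_sub_cancel] at h2
    have h3 : (x : R) ∈ (a ^ k • I : Submodule R R) := Submodule.smul_mono le_rfl inf_le_right h2
    have h4 : (a ^ k • I : Submodule R R) ≤ (LinearMap.ker φ).map (Submodule.subtype I) :=
      Submodule.smul_le.2 fun r hr n hn => ⟨r • ⟨n, hn⟩, by
        change φ _ = 0
        rw [map_smul, hk r hr], rfl⟩
    obtain ⟨y, hy, hyx⟩ := h4 h3
    have : y = x := Subtype.ext hyx
    rw [← this]
    exact hy
  let p : I →ₗ[R] R ⧸ a ^ (k + c) := (Submodule.mkQ (a ^ (k + c))) ∘ₗ I.subtype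
  have hp : LinearMap.ker p ≤ LinearMap.ker ((Gam a E).subtype ∘ₗ φ) := by
    intro x hx
    rw [LinearMap.mem_ker] at hx ⊢
    have : (x : R) ∈ a ^ (k + c) := by
      rw [← Submodule.Quotient.mk_eq_zero]
      exact hx
    rw [LinearMap.comp_apply, hker x this, map_zero]
  obtain ⟨ψ, hψ⟩ := Module.Injective.out ((LinearMap.ker p).liftQ p le_rfl)
    (LinearMap.ker_eq_bot.1 (Submodule.ker_liftQ_eq_bot _ _ _ le_rfl))
    ((LinearMap.ker p).liftQ ((Gam a E).subtype ∘ₗ φ) hp)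
  have h1 : ψ (Submodule.Quotient.mk 1) ∈ Gam a E := by
    refine ⟨k + c, fun r hr => ?_⟩
    rw [← map_smul, ← Submodule.Quotient.mk_smul]
    have : (Submodule.Quotient.mk (r • (1 : R)) : R ⧸ a ^ (k + c)) = 0 := by
      rw [Submodule.Quotient.mk_eq_zero]; simpa using hr
    rw [this, map_zero]
  refine ⟨LinearMap.toSpanSingleton R _ ⟨_, h1⟩, fun x hx => ?_⟩
  apply Subtype.ext
  have := hψ (Submodule.Quotient.mk ⟨x, hx⟩)
  change x • ψ (Submodule.Quotient.mk 1) = (φ ⟨x, hx⟩ : E)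
  rw [← map_smul, ← Submodule.Quotient.mk_smul, smul_eq_mul, mul_one]
  exact this

end
end OldNew
end

section
open CategoryTheory Abelian
namespace OldNew
variable {R : Type u} [CommRing R]
noncomputable section

def EF (a : Ideal R) (j : ℕ) (Y : Type u) [AddCommGroup Y] [Module R Y] : Prop :=
  Module.Finite R (EX (ModuleCat.of R (R ⧸ a)) Y j)

def Cof (a : Ideal R) (Y : Type u) [AddCommGroup Y] [Module R Y] : Prop := ∀ j, EF a j Y

variable [IsNoetherianRing R] {a : Ideal R}

lemma fin_mid {A B C : Type u} [AddCommGroup A] [Module R A] [AddCommGroup B] [Module R B]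
    [AddCommGroup C] [Module R C] (f : A →ₗ[R] B) (g : B →ₗ[R] C) (h : Function.Exact f g)
    (hA : Module.Finite R A) (hC : Module.Finite R C) : Module.Finite R B := by
  have := isNoetherian_of_isNoetherianRing_of_finite R A
  have := isNoetherian_of_isNoetherianRing_of_finite R C
  have : IsNoetherian R B := isNoetherian_of_range_eq_ker f g h.linearMap_ker_eq.symm
  infer_instance

section
variable {A B C : Type u} [AddCommGroup A] [Module R A] [AddCommGroup B] [Module R B]
  [AddCommGroup C] [Module R C]

lemma fin_inj (f : A →ₗ[R] B) (h : Function.Injective f)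
    (hB : Module.Finite R B) : Module.Finite R A := by
  have := isNoetherian_of_isNoetherianRing_of_finite R B
  exact Module.Finite.of_injective f h

lemma EF_congr {j : ℕ} (e : A ≃ₗ[R] B) (hA : EF a j A) : EF a j B := by
  have : Function.Surjective (em (ModuleCat.of R (R ⧸ a)) j e.toLinearMap) := fun x =>
    ⟨em _ j e.symm.toLinearMap x, by
      rw [em_comp]
      simp [em_id]⟩
  have hA' : Module.Finite R (EX (ModuleCat.of R (R ⧸ a)) A j) := hA
  exact Module.Finite.of_surjective _ this

lemma EF_fg (j : ℕ) (hA : Module.Finite R A) : EF a j A :=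
  inferInstanceAs (Module.Finite R (NExt (ModuleCat.of R (R ⧸ a)) (ModuleCat.of R A) j))

lemma EF_zero_sub (f : A →ₗ[R] B) (hf : Function.Injective f) (hB : EF a 0 B) : EF a 0 A :=
  fin_inj (em _ 0 f) (em_zero_inj _ f hf) hB

variable {f : A →ₗ[R] B} {g : B →ₗ[R] C} (h : Function.Exact f g)
    (hf : Function.Injective f) (hg : Function.Surjective g)

include h hf hg

lemma EF_mid {j : ℕ} (hA : EF a j A) (hC : EF a j C) : EF a j B :=
  fin_mid _ _ (ex_mid (ModuleCat.of R (R ⧸ a)) h hf hg j) hA hC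

lemma EF_right {j : ℕ} (hB : EF a j B) (hA : EF a (j+1) A) : EF a j C :=
  fin_mid _ _ (ex_right (ModuleCat.of R (R ⧸ a)) h hf hg j) hB hA

lemma EF_left {j : ℕ} (hC : EF a j C) (hB : EF a (j+1) B) : EF a (j+1) A :=
  fin_mid _ _ (ex_left (ModuleCat.of R (R ⧸ a)) h hf hg j) hC hB

end

section
variable {Y : Type u} [AddCommGroup Y] [Module R Y] (N : Submodule R Y)

lemma EF_mid_q {j : ℕ} (hA : EF a j N) (hC : EF a j (Y ⧸ N)) : EF a j Y :=
  EF_mid (LinearMap.exact_subtype_mkQ N) N.subtype_injective N.mkQ_surjective hA hC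

lemma EF_right_q {j : ℕ} (hB : EF a j Y) (hA : EF a (j+1) N) : EF a j (Y ⧸ N) :=
  EF_right (LinearMap.exact_subtype_mkQ N) N.subtype_injective N.mkQ_surjective hB hA

lemma EF_left_q {j : ℕ} (hC : EF a j (Y ⧸ N)) (hB : EF a (j+1) Y) : EF a (j+1) N :=
  EF_left (LinearMap.exact_subtype_mkQ N) N.subtype_injective N.mkQ_surjective hC hB

lemma EF_zero_q (hB : EF a 0 Y) : EF a 0 N := EF_zero_sub N.subtype N.subtype_injective hB

end

omit [IsNoetherianRing R] in
lemma EF_zero_iff_range {Y : Type u} [AddCommGroup Y] [Module R Y] :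
    EF a 0 Y ↔ Module.Finite R (LinearMap.range (ev0 a Y)) := by
  have e := LinearEquiv.ofInjective (ev0 a Y) (ev0_inj a Y)
  exact ⟨fun h => by
    have : Module.Finite R (EX (ModuleCat.of R (R ⧸ a)) Y 0) := h
    exact Module.Finite.equiv e, fun h => Module.Finite.equiv e.symm⟩

/-- the annihilated part -/
def ann (I : Ideal R) (Y : Type u) [AddCommGroup Y] [Module R Y] : Submodule R Y where
  carrier := {y | ∀ r ∈ I, r • y = 0}
  zero_mem' := fun r _ => smul_zero r
  add_mem' := fun hx hy r hr => by rw [smul_add, hx r hr, hy r hr, add_zero]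
  smul_mem' := fun c x hx r hr => by rw [smul_comm, hx r hr, smul_zero]

omit [IsNoetherianRing R] in
lemma mem_ann {I : Ideal R} {Y : Type u} [AddCommGroup Y] [Module R Y] {y : Y} :
    y ∈ ann I Y ↔ ∀ r ∈ I, r • y = 0 := Iff.rfl

omit [IsNoetherianRing R] in
lemma EF_zero_iff {Y : Type u} [AddCommGroup Y] [Module R Y] :
    EF a 0 Y ↔ Module.Finite R (ann a Y) := by
  rw [EF_zero_iff_range]
  have : LinearMap.range (ev0 a Y) = ann a Y := by
    ext y; rw [ev0_range]; rfl
  rw [this]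

/-- `0 :_Y a` finitely generated implies `0 :_Y a^n` finitely generated. -/
lemma ann_pow_fin {Y : Type u} [AddCommGroup Y] [Module R Y] (h : Module.Finite R (ann a Y))
    (n : ℕ) : Module.Finite R (ann (a ^ n) Y) := by
  induction n with
  | zero =>
    have : ∀ y : ann (a ^ 0) Y, y = 0 := fun y => Subtype.ext (by
      have := y.2 1 (by simp)
      simpa using this)
    have : Subsingleton (ann (a ^ 0) Y) := ⟨fun x y => by rw [this x, this y]⟩
    infer_instance
  | succ n ih =>
    obtain ⟨S, hS⟩ := (inferInstance : IsNoetherianRing R).noetherian a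
    let f : ann (a ^ (n+1)) Y →ₗ[R] (S → ann (a ^ n) Y) :=
      LinearMap.pi fun s => LinearMap.codRestrict _ ((s : R) • (ann (a ^ (n+1)) Y).subtype)
        (fun y r hr => by
          change r • (s : R) • (y : Y) = 0
          rw [smul_smul]
          exact y.2 _ (by rw [pow_succ]; exact Ideal.mul_mem_mul hr (hS ▸ Ideal.subset_span s.2)))
    have hk : ∀ y : ann (a ^ (n+1)) Y, f y = 0 → (y : Y) ∈ ann a Y := by
      intro y hy r hr
      have hr' : r ∈ Ideal.span (S : Set R) := by rw [Ideal.span, hS]; exact hr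
      have : Ideal.span (S : Set R) ≤ LinearMap.ker (LinearMap.toSpanSingleton R Y (y : Y)) :=
        Ideal.span_le.2 fun s hs => congrArg Subtype.val (congrFun hy ⟨s, hs⟩)
      exact this hr'
    have h1 : Module.Finite R (LinearMap.ker f) :=
      fin_inj (LinearMap.codRestrict (ann a Y) ((ann (a ^ (n+1)) Y).subtype ∘ₗ (LinearMap.ker f).subtype)
        (fun y => hk y.1 y.2)) (fun x y hxy => by
          have h2 := congrArg (Submodule.subtype _) hxy
          exact Subtype.ext (Subtype.ext h2)) h
    exact fin_mid (LinearMap.ker f).subtype f (LinearMap.exact_subtype_ker_map f) h1 inferInstance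

end
end OldNew
end

section
open CategoryTheory Abelian
namespace OldNew
variable {R : Type u} [CommRing R]
noncomputable section

section
variable {P : Type u} [AddCommGroup P] [Module R P]

/-- socle pieces -/
def Lp (x : R) (U : Submodule R P) (n : ℕ) : Submodule R P :=
  (U ⊓ LinearMap.ker (LinearMap.lsmul R P (x ^ (n+1)))).map (LinearMap.lsmul R P (x ^ n))

lemma mem_Lp {x : R} {U : Submodule R P} {n : ℕ} {p : P} :
    p ∈ Lp x U n ↔ ∃ u ∈ U, x ^ (n+1) • u = 0 ∧ x ^ n • u = p := by
  simp [Lp, Submodule.mem_map, and_assoc]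

lemma Lp_le (x : R) (U : Submodule R P) (n : ℕ) : Lp x U n ≤ LinearMap.ker (LinearMap.lsmul R P x) := by
  intro p hp
  obtain ⟨u, _, h, rfl⟩ := mem_Lp.1 hp
  change x • x ^ n • u = 0
  rw [smul_smul, ← pow_succ', h]

lemma Lp_mono (x : R) {U V : Submodule R P} (h : U ≤ V) (n : ℕ) : Lp x U n ≤ Lp x V n := by
  intro p hp
  obtain ⟨u, hu, h', rfl⟩ := mem_Lp.1 hp
  exact mem_Lp.2 ⟨u, h hu, h', rfl⟩

lemma Lp_anti (x : R) (U : Submodule R P) {n m : ℕ} (h : n ≤ m) : Lp x U m ≤ Lp x U n := by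
  induction m, h using Nat.le_induction with
  | base => exact le_rfl
  | succ m h ih =>
    refine le_trans ?_ ih
    intro p hp
    obtain ⟨u, hu, h', rfl⟩ := mem_Lp.1 hp
    refine mem_Lp.2 ⟨x • u, U.smul_mem _ hu, ?_, ?_⟩
    · rw [smul_smul, ← pow_succ, h']
    · rw [smul_smul, ← pow_succ]

lemma Lp_ext (x : R) (hx : ∀ p : P, ∃ k, x ^ k • p = 0) {U V : Submodule R P} (h : U ≤ V)
    (hL : ∀ n, Lp x U n = Lp x V n) : U = V := by
  refine le_antisymm h ?_
  have key : ∀ n, ∀ v ∈ V, x ^ n • v = 0 → v ∈ U := by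
    intro n
    induction n with
    | zero => intro v _ h0; rw [pow_zero, one_smul] at h0; rw [h0]; exact U.zero_mem
    | succ n ih =>
      intro v hv h0
      have : x ^ n • v ∈ Lp x U n := by rw [hL]; exact mem_Lp.2 ⟨v, hv, h0, rfl⟩
      obtain ⟨u, hu, _, h2⟩ := mem_Lp.1 this
      have := ih (v - u) (V.sub_mem hv (h hu)) (by rw [smul_sub, h2, sub_self])
      simpa using U.add_mem this hu
  intro v hv
  obtain ⟨k, hk⟩ := hx v
  exact key k v hv hk

lemma chain_in {K : Submodule R P} [IsArtinian R K] (f : ℕ → Submodule R P) (hf : Antitone f)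
    (hK : ∀ n, f n ≤ K) : ∃ n, ∀ m, n ≤ m → f n = f m := by
  obtain ⟨n, hn⟩ := (monotone_stabilizes_iff_artinian (R := R) (M := K)).2 inferInstance
    ⟨fun n => OrderDual.toDual ((f n).comap K.subtype), fun i j hij =>
      Submodule.comap_mono (hf hij)⟩
  refine ⟨n, fun m hm => ?_⟩
  have h1 : (f n).comap K.subtype = (f m).comap K.subtype := hn m hm
  have h2 := congrArg (Submodule.map K.subtype) h1
  rwa [Submodule.map_comap_subtype, Submodule.map_comap_subtype, inf_eq_right.2 (hK n),
    inf_eq_right.2 (hK m)] at h2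

theorem artin_x (x : R) (hx : ∀ p : P, ∃ k, x ^ k • p = 0)
    (hK : IsArtinian R (LinearMap.ker (LinearMap.lsmul R P x))) : IsArtinian R P := by
  rw [← monotone_stabilizes_iff_artinian]
  intro f
  let U : ℕ → Submodule R P := fun n => OrderDual.ofDual (f n)
  have hU : Antitone U := fun i j hij => f.2 hij
  obtain ⟨m0, hm0⟩ := chain_in (K := LinearMap.ker (LinearMap.lsmul R P x)) (fun m => Lp x (U m) m)
    (fun i j hij => (Lp_mono x (hU hij) j).trans (Lp_anti x _ hij)) (fun n => Lp_le _ _ _)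
  have h1 : ∀ n, ∃ k, ∀ m, k ≤ m → Lp x (U k) n = Lp x (U m) n := fun n =>
    chain_in (K := LinearMap.ker (LinearMap.lsmul R P x)) (fun m => Lp x (U m) n)
    (fun i j hij => (Lp_mono x (hU hij) n)) (fun n => Lp_le _ _ _)
  choose k hk using h1
  let N := max m0 ((Finset.range m0).sup k)
  refine ⟨N, fun m hm => ?_⟩
  have : U m = U N := by
    refine Lp_ext x hx (hU hm) fun n => ?_
    by_cases hn : n < m0
    · have hkN : k n ≤ N := le_max_of_le_right (Finset.le_sup (Finset.mem_range.2 hn))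
      rw [← hk n N hkN, ← hk n m (hkN.trans hm)]
    · push Not at hn
      have hmN : m0 ≤ N := le_max_left _ _
      refine le_antisymm (Lp_mono x (hU hm) n) ?_
      calc Lp x (U N) n ≤ Lp x (U m0) m0 := (Lp_mono x (hU hmN) n).trans (Lp_anti x _ hn)
        _ = Lp x (U (max m n)) (max m n) := hm0 _ (le_max_of_le_right hn)
        _ ≤ Lp x (U m) n := (Lp_mono x (hU (le_max_left _ _)) _).trans (Lp_anti x _ (le_max_right _ _))
  exact this.symm

lemma artin_x_sub (x : R) (hx : ∀ p : P, ∃ k, x ^ k • p = 0) (Q : Submodule R P)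
    (hK : IsArtinian R ↥(Q ⊓ LinearMap.ker (LinearMap.lsmul R P x))) : IsArtinian R Q := by
  refine artin_x x (fun p => ?_) ?_
  · obtain ⟨k, hk⟩ := hx p
    exact ⟨k, Subtype.ext hk⟩
  · refine isArtinian_of_injective (P := ↥(Q ⊓ LinearMap.ker (LinearMap.lsmul R P x)))
      (LinearMap.codRestrict _ (Q.subtype ∘ₗ (LinearMap.ker (LinearMap.lsmul R Q x)).subtype)
      (fun y => ⟨y.1.2, congrArg Subtype.val y.2⟩)) (fun y z h => ?_)
    have h2 := congrArg Subtype.val h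
    exact Subtype.ext (Subtype.ext h2)

theorem artin_ideal (a : Ideal R) (ha : a.FG) (ht : ∀ p : P, ∃ k, ∀ r ∈ a ^ k, r • p = 0)
    (hK : IsArtinian R (ann a P)) : IsArtinian R P := by
  obtain ⟨S, hS⟩ := ha
  have key : ∀ S : Finset R, (∀ s ∈ S, s ∈ a) → ∀ Q : Submodule R P,
      IsArtinian R ↥(Q ⊓ ann (Ideal.span (S : Set R)) P) → IsArtinian R Q := by
    classical
    intro S
    induction S using Finset.induction_on with
    | empty =>
      intro _ Q hQ
      have : Q ⊓ ann (Ideal.span ((∅ : Finset R) : Set R)) P = Q := by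
        refine inf_eq_left.2 fun q _ r hr => ?_
        simp at hr
        rw [hr, zero_smul]
      rwa [this] at hQ
    | insert s S _ ih =>
      intro hs Q hQ
      refine artin_x_sub s (fun p => ?_) Q (ih (fun t ht => hs t (Finset.mem_insert_of_mem ht)) _ ?_)
      · obtain ⟨k, hk⟩ := ht p
        exact ⟨k, hk _ (Ideal.pow_mem_pow (hs s (Finset.mem_insert_self _ _)) k)⟩
      · have : Q ⊓ LinearMap.ker (LinearMap.lsmul R P s) ⊓ ann (Ideal.span (S : Set R)) P ≤
            Q ⊓ ann (Ideal.span ((insert s S : Finset R) : Set R)) P := by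
          rintro q ⟨⟨h1, h2⟩, h3⟩
          refine ⟨h1, fun r hr => ?_⟩
          have : Ideal.span ((insert s S : Finset R) : Set R) ≤
              LinearMap.ker (LinearMap.toSpanSingleton R P q) := by
            refine Ideal.span_le.2 fun t ht => ?_
            rcases Finset.mem_insert.1 ht with rfl | ht
            · exact h2
            · exact h3 t (Ideal.subset_span ht)
          exact this hr
        exact isArtinian_of_le this
  have := key S (fun s hs => hS ▸ Ideal.subset_span hs) ⊤ (by
    rw [top_inf_eq, hS]; exact hK)
  exact isArtinian_of_linearEquiv (Submodule.topEquiv (R := R) (M := P))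

open Pointwise in
lemma irred_dich [IsArtinian R P] {S : Submodule R P} (hS : SupIrred S) (x : R) :
    x • S = S ∨ x ∈ S.annihilator.radical := by
  obtain ⟨k, hk⟩ := (monotone_stabilizes_iff_artinian (R := R) (M := P)).2 inferInstance
    ⟨fun n => OrderDual.toDual (x ^ n • S), monotone_nat_of_le_succ fun n => by
      change x ^ (n+1) • S ≤ x ^ n • S
      rw [pow_succ, mul_smul]
      exact Submodule.map_mono (Submodule.smul_le_self_of_tower x S)⟩
  have hk' : ∀ m, k ≤ m → x ^ k • S = x ^ m • S := hk
  have hle : x ^ k • S ≤ S := Submodule.smul_le_self_of_tower _ S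
  have hsup : x ^ k • S ⊔ (S ⊓ LinearMap.ker (LinearMap.lsmul R P (x ^ k))) = S := by
    refine le_antisymm (sup_le hle inf_le_left) fun s hs => ?_
    have : x ^ k • s ∈ x ^ (k + k) • S := by
      rw [← hk' (k+k) (by omega)]
      exact Submodule.smul_mem_pointwise_smul s _ S hs
    obtain ⟨u, hu, h⟩ := (Submodule.mem_smul_pointwise_iff_exists _ _ _).1 this
    refine Submodule.mem_sup.2 ⟨x ^ k • u, Submodule.smul_mem_pointwise_smul u _ S hu, s - x ^ k • u,
      ⟨S.sub_mem hs (S.smul_mem _ hu), ?_⟩, by abel⟩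
    change x ^ k • (s - x ^ k • u) = 0
    rw [smul_sub, smul_smul, ← pow_add, h, sub_self]
  rcases hS.2 hsup with h | h
  · left
    have h2 := hk' (k+1) (by omega)
    rw [pow_succ', mul_smul, h] at h2
    exact h2.symm
  · right
    refine ⟨k, Submodule.mem_annihilator.2 fun s hs => ?_⟩
    rw [← h] at hs
    exact hs.2

open Pointwise in
lemma irred_prime [IsArtinian R P] {S : Submodule R P} (hS : SupIrred S) :
    S.annihilator.radical.IsPrime := by
  have hne : S ≠ ⊥ := fun h => hS.1 (h ▸ isMin_bot)
  have hnot : ∀ x : R, x • S = S → x ∉ S.annihilator.radical := by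
    rintro x hx ⟨k, hk⟩
    have : x ^ k • S = S := by
      clear hk
      induction k with
      | zero => rw [pow_zero, one_smul]
      | succ k ih => rw [pow_succ, mul_smul, hx, ih]
    refine hne ((Submodule.eq_bot_iff _).2 fun s hs => ?_)
    rw [← this] at hs
    obtain ⟨u, hu, rfl⟩ := (Submodule.mem_smul_pointwise_iff_exists _ _ _).1 hs
    exact Submodule.mem_annihilator.1 hk u hu
  refine ⟨fun h => hnot 1 (one_smul _ _) (h ▸ trivial), fun {x y} hxy => ?_⟩
  by_contra! hcon
  have h1 := (irred_dich hS x).resolve_right hcon.1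
  have h2 := (irred_dich hS y).resolve_right hcon.2
  exact hnot (x * y) (by rw [mul_smul, h2, h1]) hxy

open Pointwise in
theorem gen_elt [IsArtinian R P] (a : Ideal R) (ha : a.FG) (Q : Submodule R P) (hQ : a • Q = Q) :
    ∃ x ∈ a, x • Q = Q := by
  classical
  obtain ⟨s, hs, hirr⟩ := exists_supIrred_decomposition Q
  let s' := s.filter fun S => ¬ a ≤ S.annihilator.radical
  have h1 : ¬ ((a : Set R) ⊆ ⋃ S ∈ (s' : Set (Submodule R P)), (S.annihilator.radical : Set R)) := by
    intro h
    obtain ⟨S, hS, hle⟩ := (Ideal.subset_union_prime (s := s')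
      (f := fun S : Submodule R P => S.annihilator.radical) ⊥ ⊥
      (fun S hS _ _ => irred_prime (hirr (Finset.mem_filter.1 hS).1))).1 h
    exact (Finset.mem_filter.1 hS).2 hle
  obtain ⟨x, hxa, hx⟩ := Set.not_subset.1 h1
  refine ⟨x, hxa, le_antisymm (Submodule.smul_le_self_of_tower x Q) ?_⟩
  have hxS : ∀ S ∈ s', x • S = S := fun S hS =>
    (irred_dich (hirr (Finset.mem_filter.1 hS).1) x).resolve_right fun h =>
      hx (Set.mem_biUnion hS h)
  have h2 : ∀ S ∈ s, ∃ n, ¬ (S ∈ s') → a ^ n • S = ⊥ := by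
    intro S hS
    by_cases hS' : S ∈ s'
    · exact ⟨0, fun h => absurd hS' h⟩
    · have : a ≤ S.annihilator.radical := by
        by_contra h
        exact hS' (Finset.mem_filter.2 ⟨hS, h⟩)
      obtain ⟨n, hn⟩ := Ideal.exists_pow_le_of_le_radical_of_fg this ha
      refine ⟨n, fun _ => ?_⟩
      rw [← le_bot_iff, Submodule.smul_le]
      intro r hr m hm
      exact (Submodule.mem_bot R).2 (Submodule.mem_annihilator.1 (hn hr) m hm)
  choose! n hn using h2
  let N := s.sup n
  have hNQ : ∀ N : ℕ, a ^ N • Q = Q := by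
    intro N
    induction N with
    | zero => rw [pow_zero, Ideal.one_eq_top, Submodule.top_smul]
    | succ N ih => rw [pow_succ, Submodule.mul_smul, hQ, ih]
  have hQs' : Q ≤ s'.sup id := by
    rw [← hNQ N, ← hs]
    have : ∀ s0 ⊆ s, a ^ N • s0.sup id ≤ s'.sup id := by
      intro s0
      induction s0 using Finset.induction_on with
      | empty => intro _; simp
      | insert S s0 _ ih =>
        intro hsub
        rw [Finset.sup_insert, Submodule.smul_sup]
        refine sup_le ?_ (ih fun t ht => hsub (Finset.mem_insert_of_mem ht))
        have hSs : S ∈ s := hsub (Finset.mem_insert_self _ _)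
        by_cases hS' : S ∈ s'
        · exact Submodule.smul_le_right.trans (Finset.le_sup (f := id) hS')
        · have : a ^ N • S ≤ a ^ n S • S :=
            Submodule.smul_mono_left (Ideal.pow_le_pow_right (Finset.le_sup hSs))
          rw [hn S hSs hS'] at this
          exact this.trans bot_le
    exact this s subset_rfl
  refine hQs'.trans (Finset.sup_le fun S hS => ?_)
  change S ≤ x • Q
  rw [← hxS S hS]
  refine Submodule.map_mono ?_
  rw [← hs]
  exact Finset.le_sup (f := id) (Finset.mem_filter.1 hS).1

open Pointwise in
theorem gen_elt' [IsArtinian R P] (a : Ideal R) (ha : a.FG) :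
    ∃ n : ℕ, ∃ x ∈ a, x • (a ^ n • (⊤ : Submodule R P)) = a ^ n • (⊤ : Submodule R P) := by
  obtain ⟨k, hk⟩ := (monotone_stabilizes_iff_artinian (R := R) (M := P)).2 inferInstance
    ⟨fun n => OrderDual.toDual (a ^ n • (⊤ : Submodule R P)), fun n m h =>
      Submodule.smul_mono_left (Ideal.pow_le_pow_right h)⟩
  have hk' : a ^ k • (⊤ : Submodule R P) = a ^ (k+1) • (⊤ : Submodule R P) := hk (k+1) (by omega)
  refine ⟨k, gen_elt a ha _ ?_⟩
  rw [← Submodule.mul_smul, ← pow_succ', ← hk']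

end
end
end OldNew
end

section
open CategoryTheory Abelian
namespace OldNew
variable {R : Type u} [CommRing R]
noncomputable section
variable [IsNoetherianRing R]

lemma art_of_dim0 (F : Type u) [AddCommGroup F] [Module R F] (hF : Module.Finite R F)
    (h : ∀ p ∈ Module.support R F, p.asIdeal.IsMaximal) : IsArtinian R F := by
  let I := Module.annihilator R F
  have h0 : Ring.KrullDimLE 0 (R ⧸ I) := Ring.krullDimLE_zero_iff.mpr fun J prime =>
    Ideal.isMaximal_of_isIntegral_of_isMaximal_comap (R := R) _ <| by
      have := prime.comap (Ideal.Quotient.mk I)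
      refine h ⟨_, this⟩ (Module.mem_support_iff_of_finite.2 ?_)
      intro r hr
      change Ideal.Quotient.mk I r ∈ J
      rw [Ideal.Quotient.eq_zero_iff_mem.2 hr]
      exact J.zero_mem
  have h1 : IsArtinianRing (R ⧸ I) := IsNoetherianRing.isArtinianRing_of_krullDimLE_zero
  have h2 : IsArtinian R (R ⧸ I) :=
    isArtinian_of_surjective_algebraMap (S := R) (R := R ⧸ I) (M := R ⧸ I)
      (Ideal.Quotient.mk_surjective (I := I))
  obtain ⟨n, f, hf⟩ := Module.Finite.exists_fin' R F
  let g : (Fin n → R ⧸ I) →ₗ[R] F := ∑ i, (Submodule.liftQ I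
    (LinearMap.toSpanSingleton R F (f (Pi.single i 1)))
    (fun r hr => Module.mem_annihilator.1 hr _)) ∘ₗ LinearMap.proj i
  refine isArtinian_of_surjective _ g fun y => ?_
  obtain ⟨v, rfl⟩ := hf y
  refine ⟨fun i => Ideal.Quotient.mk I (v i), ?_⟩
  have hv : v = ∑ i, v i • Pi.single i (1 : R) := by
    ext i; simp [Finset.sum_apply, Pi.single_apply]
  conv_rhs => rw [hv]
  rw [map_sum]
  simp only [g, LinearMap.sum_apply, map_smul]
  rfl

def Tor (a : Ideal R) (Y : Type u) [AddCommGroup Y] [Module R Y] : Prop :=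
  ∀ y : Y, ∃ k, ∀ r ∈ a ^ k, r • y = 0

variable {a : Ideal R}
section
variable {Y Z : Type u} [AddCommGroup Y] [Module R Y] [AddCommGroup Z] [Module R Z]

omit [IsNoetherianRing R] in
lemma Tor_inj (f : Z →ₗ[R] Y) (hf : Function.Injective f) (h : Tor a Y) : Tor a Z := fun z => by
  obtain ⟨k, hk⟩ := h (f z)
  exact ⟨k, fun r hr => hf (by rw [map_smul, hk r hr, map_zero])⟩

omit [IsNoetherianRing R] in
lemma Tor_surj (f : Y →ₗ[R] Z) (hf : Function.Surjective f) (h : Tor a Y) : Tor a Z := fun z => by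
  obtain ⟨y, rfl⟩ := hf z
  obtain ⟨k, hk⟩ := h y
  exact ⟨k, fun r hr => by rw [← map_smul, hk r hr, map_zero]⟩

lemma Cof_of_pow (h : EF a 0 Y) (n : ℕ) (hk : ∀ r ∈ a ^ n, ∀ y : Y, r • y = 0) : Cof a Y := by
  have h1 := ann_pow_fin (EF_zero_iff.1 h) n
  have h2 : ann (a ^ n) Y = ⊤ := top_le_iff.1 fun y _ r hr => hk r hr y
  rw [h2] at h1
  have : Module.Finite R Y := Module.Finite.equiv Submodule.topEquiv
  exact fun j => EF_fg j this

lemma kill_lsmul {x : R} (hx : x ∈ a) (j : ℕ) (v : EX (ModuleCat.of R (R ⧸ a)) Y j) :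
    em _ j (LinearMap.lsmul R Y x) v = 0 := by
  have : LinearMap.lsmul R Y x = x • LinearMap.id := by ext; rfl
  rw [this, em_smul_id]
  exact kill a Y j x hx v

/-- surjective multiplication -/
lemma Cof_of_surj {x : R} (hx : x ∈ a) (hs : Function.Surjective (LinearMap.lsmul R Y x))
    (hK : Cof a (LinearMap.ker (LinearMap.lsmul R Y x))) : Cof a Y := fun j => by
  let h : Function.Exact (LinearMap.ker (LinearMap.lsmul R Y x)).subtype (LinearMap.lsmul R Y x) :=
    LinearMap.exact_subtype_ker_map _
  have hex := ex_right (ModuleCat.of R (R ⧸ a)) h (Submodule.subtype_injective _) hs j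
  refine fin_inj (dl (ModuleCat.of R (R ⧸ a)) h (Submodule.subtype_injective _) hs j) ?_ (hK (j+1))
  rw [← LinearMap.ker_eq_bot, Submodule.eq_bot_iff]
  intro v hv
  obtain ⟨w, rfl⟩ := (hex v).1 hv
  exact kill_lsmul hx j w

/-- Melkersson's lemma -/
lemma Cof_melk {x : R} (hx : x ∈ a) (h0 : EF a 0 Y)
    (hK : Cof a (LinearMap.ker (LinearMap.lsmul R Y x)))
    (hC : Cof a (Y ⧸ LinearMap.range (LinearMap.lsmul R Y x))) : Cof a Y := by
  intro j
  cases j with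
  | zero => exact h0
  | succ j =>
    let X := ModuleCat.of R (R ⧸ a)
    let f : Y →ₗ[R] LinearMap.range (LinearMap.lsmul R Y x) := (LinearMap.lsmul R Y x).rangeRestrict
    have hf : Function.Surjective f := LinearMap.surjective_rangeRestrict _
    have hfex : Function.Exact (LinearMap.ker (LinearMap.lsmul R Y x)).subtype f := by
      intro y
      constructor
      · intro hy
        exact ⟨⟨y, congrArg Subtype.val hy⟩, rfl⟩
      · rintro ⟨y, rfl⟩
        exact Subtype.ext y.2
    let g := (LinearMap.range (LinearMap.lsmul R Y x)).subtype
    have e1 := ex_mid X hfex (Submodule.subtype_injective _) hf (j+1)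
    have hgq : Function.Exact g (LinearMap.range (LinearMap.lsmul R Y x)).mkQ :=
      LinearMap.exact_subtype_mkQ _
    have e2 := ex_left X hgq (Submodule.subtype_injective _) (Submodule.mkQ_surjective _) j
    have hkf : Module.Finite R (LinearMap.ker (em X (j+1) f)) := by
      rw [e1.linearMap_ker_eq]
      have : Module.Finite R (EX X (LinearMap.ker (LinearMap.lsmul R Y x)) (j+1)) := hK (j+1)
      exact Module.Finite.range _
    have hkg : Module.Finite R (LinearMap.ker (em X (j+1) g)) := by
      rw [e2.linearMap_ker_eq]
      have : Module.Finite R (EX X (Y ⧸ LinearMap.range (LinearMap.lsmul R Y x)) j) := hC j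
      exact Module.Finite.range _
    have hgf : ∀ v, em X (j+1) f v ∈ LinearMap.ker (em X (j+1) g) := by
      intro v
      rw [LinearMap.mem_ker, em_comp]
      exact kill_lsmul hx (j+1) v
    refine fin_mid (LinearMap.ker (em X (j+1) f)).subtype
      (LinearMap.codRestrict (LinearMap.ker (em X (j+1) g)) (em X (j+1) f) hgf) ?_ hkf hkg
    intro v
    constructor
    · intro hv
      exact ⟨⟨v, congrArg Subtype.val hv⟩, rfl⟩
    · rintro ⟨v, rfl⟩
      exact Subtype.ext v.2
end

theorem Stat0_art (b : Ideal R) : ∀ (Y : Type u) [AddCommGroup Y] [Module R Y],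
    IsArtinian R Y → EF a 0 Y → (∀ r ∈ b, ∀ y : Y, r • y = 0) → Cof a Y := by
  induction b using WellFoundedGT.induction with
  | ind b ih =>
  intro Y _ _ hA h0 hb
  obtain ⟨n, x, hxa, hx⟩ := gen_elt' (P := Y) a (IsNoetherian.noetherian a)
  have hx' : ∀ y ∈ a ^ n • (⊤ : Submodule R Y), ∃ z ∈ a ^ n • (⊤ : Submodule R Y), x • z = y := by
    intro y hy
    rw [← hx] at hy
    exact (Submodule.mem_smul_pointwise_iff_exists _ _ _).1 hy
  set P := a ^ n • (⊤ : Submodule R Y) with hP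
  by_cases hxb : x ∈ b
  · refine Cof_of_pow h0 n fun r hr y => ?_
    obtain ⟨z, _, hz⟩ := hx' (r • y) (Submodule.smul_mem_smul hr trivial)
    rw [← hz]
    exact hb x hxb z
  · have hlt : b < b ⊔ Ideal.span {x} := by
      refine lt_of_le_not_ge le_sup_left fun h => hxb (h ?_)
      exact Ideal.mem_sup_right (Ideal.mem_span_singleton_self x)
    have hP0 : EF a 0 P := EF_zero_q P h0
    have hPC : Cof a P := by
      refine Cof_of_surj hxa (fun y => ?_) (ih _ hlt _ inferInstance (EF_zero_q _ hP0) ?_)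
      · obtain ⟨z, hz, h⟩ := hx' y y.2
        exact ⟨⟨z, hz⟩, Subtype.ext h⟩
      · intro r hr y
        obtain ⟨r1, h1, r2, h2, rfl⟩ := Submodule.mem_sup.1 hr
        obtain ⟨c, rfl⟩ := Ideal.mem_span_singleton'.1 h2
        apply Subtype.ext
        have hy : x • (y : P) = 0 := y.2
        change (r1 + c * x) • (y : P) = 0
        rw [add_smul, mul_smul, hy, smul_zero, add_zero]
        exact Subtype.ext (hb r1 h1 _)
    have hQ : Cof a (Y ⧸ P) := by
      refine Cof_of_pow (EF_right_q P h0 (hPC 1)) n fun r hr y => ?_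
      obtain ⟨y, rfl⟩ := P.mkQ_surjective y
      rw [← map_smul]
      exact (Submodule.Quotient.mk_eq_zero _).2 (Submodule.smul_mem_smul hr trivial)
    exact fun j => EF_mid_q P (hPC j) (hQ j)

theorem Stat0 (Y : Type u) [AddCommGroup Y] [Module R Y] (ht : Tor a Y)
    (hd : ∀ p ∈ Module.support R Y, p.asIdeal.IsMaximal) (h0 : EF a 0 Y) : Cof a Y := by
  refine Stat0_art ⊥ Y ?_ h0 (fun r hr y => by rw [(Submodule.mem_bot R).1 hr, zero_smul])
  refine artin_ideal a (IsNoetherian.noetherian a) ht (art_of_dim0 _ (EF_zero_iff.1 h0) ?_)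
  intro p hp
  exact hd p (Module.support_subset_of_injective (ann a Y).subtype (Submodule.subtype_injective _) hp)

end
end OldNew
end

section
open CategoryTheory Abelian
namespace OldNew
variable {R : Type u} [CommRing R]
noncomputable section
variable [IsNoetherianRing R] {a : Ideal R}

lemma T_unif {Y : Type u} [AddCommGroup Y] [Module R Y] (T : Submonoid R) (I : Ideal R) (y : Y)
    (h : ∀ r ∈ I, ∃ t ∈ T, t • r • y = 0) : ∃ t ∈ T, ∀ r ∈ I, r • t • y = 0 := by
  obtain ⟨S, hS⟩ := IsNoetherian.noetherian I
  have hS' : ∀ s ∈ S, s ∈ I := fun s hs => hS ▸ Submodule.subset_span hs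
  choose! t ht htz using h
  refine ⟨∏ s ∈ S, t s, T.prod_mem fun s hs => ht s (hS' s hs), ?_⟩
  have : Submodule.span R (S : Set R) ≤
      LinearMap.ker (LinearMap.toSpanSingleton R Y ((∏ s ∈ S, t s) • y)) := by
    refine Submodule.span_le.2 fun s hs => ?_
    change s • (∏ s ∈ S, t s) • y = 0
    classical
    rw [← Finset.prod_erase_mul S t hs, smul_comm, mul_smul, htz s (hS' s hs), smul_zero]
  intro r hr
  rw [← hS] at hr
  exact this hr

lemma Cof_Ttor (T : Submonoid R) (Y : Type u) [AddCommGroup Y] [Module R Y] (ht : Tor a Y)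
    (hmax : ∀ p ∈ Module.support R Y, (∃ t ∈ T, t ∈ p.asIdeal) → p.asIdeal.IsMaximal)
    (h0 : EF a 0 Y) (n : ℕ) (hT : ∀ r ∈ a ^ n, ∀ y : Y, ∃ t ∈ T, t • r • y = 0) : Cof a Y := by
  have hF := ann_pow_fin (EF_zero_iff.1 h0) n
  have hFC : Cof a (ann (a ^ n) Y) := fun j => EF_fg j hF
  have hQ : Cof a (Y ⧸ ann (a ^ n) Y) := by
    refine Stat0 _ (Tor_surj _ (ann (a ^ n) Y).mkQ_surjective ht) ?_ (EF_right_q _ h0 (hFC 1))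
    intro p hp
    refine hmax p (Module.support_subset_of_surjective _ (ann (a ^ n) Y).mkQ_surjective hp) ?_
    obtain ⟨m, hm⟩ := Module.mem_support_iff'.1 hp
    obtain ⟨y, rfl⟩ := (ann (a ^ n) Y).mkQ_surjective m
    obtain ⟨t, htT, h⟩ := T_unif T (a ^ n) y (fun r hr => hT r hr y)
    refine ⟨t, htT, ?_⟩
    by_contra hcon
    apply hm t hcon
    rw [← map_smul]
    exact (Submodule.Quotient.mk_eq_zero _).2 h
  exact fun j => EF_mid_q _ (hFC j) (hQ j)

lemma gen_T (T : Submonoid R) (Y : Type u) [AddCommGroup Y] [Module R Y]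
    (hA : IsArtinian (Localization T) (LocalizedModule T Y)) :
    ∃ n : ℕ, ∃ x ∈ a, ∀ r ∈ a ^ n, ∀ y : Y, ∃ t ∈ T, ∃ z : Y, t • r • y = x • z := by
  have : IsNoetherianRing (Localization T) := IsLocalization.isNoetherianRing T _ inferInstance
  obtain ⟨n, x', hxa, hx⟩ := gen_elt' (P := LocalizedModule T Y)
    (a.map (algebraMap R (Localization T))) (IsNoetherian.noetherian _)
  obtain ⟨⟨⟨x, hx1⟩, s⟩, hs⟩ := (IsLocalization.mem_map_algebraMap_iff T (Localization T)).1 hxa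
  refine ⟨n, x, hx1, fun r hr y => ?_⟩
  have h1 : algebraMap R (Localization T) r • LocalizedModule.mkLinearMap T Y y ∈
      (a.map (algebraMap R (Localization T))) ^ n • (⊤ : Submodule (Localization T) (LocalizedModule T Y)) := by
    refine Submodule.smul_mem_smul ?_ trivial
    rw [← Ideal.map_pow]
    exact Ideal.mem_map_of_mem _ hr
  rw [← hx] at h1
  obtain ⟨z, _, hz⟩ := (Submodule.mem_smul_pointwise_iff_exists _ _ _).1 h1
  -- multiply by s
  have h2 : algebraMap R (Localization T) x • z =
      LocalizedModule.mkLinearMap T Y ((s : R) • r • y) := by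
    rw [map_smul, map_smul, ← algebraMap_smul (Localization T) (s : R),
      ← algebraMap_smul (Localization T) r, ← hz, smul_smul]
    congr 1
    rw [mul_comm]
    exact hs.symm
  obtain ⟨⟨z', u⟩, hz'⟩ := IsLocalizedModule.surj T (LocalizedModule.mkLinearMap T Y) z
  have h3 : LocalizedModule.mkLinearMap T Y (x • z') =
      LocalizedModule.mkLinearMap T Y ((u : R) • (s : R) • r • y) := by
    rw [map_smul, map_smul _ (u : R), ← h2, ← hz', algebraMap_smul, smul_comm]
    rfl
  obtain ⟨c, hc⟩ := (IsLocalizedModule.eq_iff_exists T (LocalizedModule.mkLinearMap T Y)).1 h3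
  refine ⟨c * (u * s), T.mul_mem c.2 (T.mul_mem u.2 s.2), (c : R) • z', ?_⟩
  have hc' : (c : R) • x • z' = (c : R) • (u : R) • (s : R) • r • y := hc
  rw [mul_smul, mul_smul, ← hc', smul_comm]

lemma art_loc_sub (T : Submonoid R) {Y Z : Type u} [AddCommGroup Y] [Module R Y] [AddCommGroup Z]
    [Module R Z] (f : Z →ₗ[R] Y) (hf : Function.Injective f)
    (hA : IsArtinian (Localization T) (LocalizedModule T Y)) :
    IsArtinian (Localization T) (LocalizedModule T Z) :=
  isArtinian_of_injective (LocalizedModule.map T f) (LocalizedModule.map_injective T f hf)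

theorem Stat1_art (T : Submonoid R) (b : Ideal R) : ∀ (Y : Type u) [AddCommGroup Y] [Module R Y],
    Tor a Y → IsArtinian (Localization T) (LocalizedModule T Y) →
    (∀ p ∈ Module.support R Y, (∃ t ∈ T, t ∈ p.asIdeal) → p.asIdeal.IsMaximal) →
    EF a 0 Y → EF a 1 Y → (∀ r ∈ b, ∀ y : Y, r • y = 0) → Cof a Y := by
  induction b using WellFoundedGT.induction with
  | ind b ih =>
  intro Y _ _ ht hA hmax h0 h1 hb
  obtain ⟨n, x, hxa, hx⟩ := gen_T (a := a) T Y hA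
  by_cases hxb : x ∈ b
  · refine Cof_Ttor T Y ht hmax h0 n fun r hr y => ?_
    obtain ⟨t, htT, z, hz⟩ := hx r hr y
    exact ⟨t, htT, by rw [hz, hb x hxb]⟩
  · have hlt : b < b ⊔ Ideal.span {x} := by
      refine lt_of_le_not_ge le_sup_left fun h => hxb (h ?_)
      exact Ideal.mem_sup_right (Ideal.mem_span_singleton_self x)
    let K := LinearMap.ker (LinearMap.lsmul R Y x)
    let X := LinearMap.range (LinearMap.lsmul R Y x)
    let f : Y →ₗ[R] X := (LinearMap.lsmul R Y x).rangeRestrict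
    have hf : Function.Surjective f := LinearMap.surjective_rangeRestrict _
    have hfex : Function.Exact K.subtype f := by
      intro y
      constructor
      · intro hy
        exact ⟨⟨y, congrArg Subtype.val hy⟩, rfl⟩
      · rintro ⟨y, rfl⟩
        exact Subtype.ext y.2
    have hX0 : EF a 0 X := EF_zero_q X h0
    have hK : Cof a K := by
      refine ih _ hlt K (Tor_inj K.subtype K.subtype_injective ht)
        (art_loc_sub T K.subtype K.subtype_injective hA)
        (fun p hp => hmax p (Module.support_subset_of_injective K.subtype K.subtype_injective hp))
        (EF_zero_q K h0) (EF_left hfex K.subtype_injective hf hX0 h1) ?_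
      intro r hr y
      obtain ⟨r1, h1, r2, h2, rfl⟩ := Submodule.mem_sup.1 hr
      obtain ⟨c, rfl⟩ := Ideal.mem_span_singleton'.1 h2
      apply Subtype.ext
      have hy : x • (y : Y) = 0 := y.2
      change (r1 + c * x) • (y : Y) = 0
      rw [add_smul, mul_smul, hy, smul_zero, add_zero]
      exact hb r1 h1 _
    have hX1 : EF a 1 X := EF_right hfex K.subtype_injective hf h1 (hK 2)
    have hC : Cof a (Y ⧸ X) := by
      refine Cof_Ttor T _ (Tor_surj _ X.mkQ_surjective ht)
        (fun p hp => hmax p (Module.support_subset_of_surjective _ X.mkQ_surjective hp))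
        (EF_right_q X h0 hX1) n fun r hr y => ?_
      obtain ⟨y, rfl⟩ := X.mkQ_surjective y
      obtain ⟨t, htT, z, hz⟩ := hx r hr y
      refine ⟨t, htT, ?_⟩
      rw [← map_smul, ← map_smul]
      exact (Submodule.Quotient.mk_eq_zero _).2 ⟨z, hz.symm⟩
    exact Cof_melk hxa h0 hK hC

end
end OldNew
end

section
open CategoryTheory Abelian
namespace OldNew
variable {R : Type u} [CommRing R]
noncomputable section
variable [IsNoetherianRing R] {a : Ideal R}

omit [IsNoetherianRing R] in
lemma chain2 {Y : Type u} [AddCommGroup Y] [Module R Y]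
    (hd : Order.krullDim (Module.support R Y) ≤ 1) {p q : PrimeSpectrum R}
    (hp : p ∈ Module.support R Y) (hpq : p ≤ q) (hq : ¬ q.asIdeal.IsMaximal) : p = q := by
  by_contra hne
  obtain ⟨m, hm, hqm⟩ := Ideal.exists_le_maximal q.asIdeal q.isPrime.ne_top
  let m' : PrimeSpectrum R := ⟨m, hm.isPrime⟩
  have hqm' : q ≤ m' := hqm
  have hqs : q ∈ Module.support R Y := Module.mem_support_mono hpq hp
  have hms : m' ∈ Module.support R Y := Module.mem_support_mono hqm' hqs
  have h1 : p < q := lt_of_le_of_ne hpq hne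
  have h2 : q < m' := lt_of_le_of_ne hqm' (fun h => hq (by rw [h]; exact hm))
  let s : LTSeries (Module.support R Y) :=
    { length := 2
      toFun := ![⟨p, hp⟩, ⟨q, hqs⟩, ⟨m', hms⟩]
      step := fun i => by
        fin_cases i
        · exact h1
        · exact h2 }
  have h3 := (Order.LTSeries.length_le_krullDim s).trans hd
  have h4 : s.length = 2 := rfl
  rw [h4] at h3
  exact absurd h3 (by decide)

lemma nonmax_ass {Y : Type u} [AddCommGroup Y] [Module R Y] (ht : Tor a Y)
    (hd : Order.krullDim (Module.support R Y) ≤ 1) {p : PrimeSpectrum R}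
    (hp : p ∈ Module.support R Y) (hnm : ¬ p.asIdeal.IsMaximal) :
    p.asIdeal ∈ associatedPrimes R (ann a Y) := by
  obtain ⟨y, hy⟩ := Module.mem_support_iff_exists_annihilator.1 hp
  have hpr := p.isPrime
  obtain ⟨q, hq, hqp⟩ := Ideal.exists_minimalPrimes_le hy
  have hq' : q ∈ associatedPrimes R (Submodule.span R {y}) :=
    Module.associatedPrimes.minimalPrimes_annihilator_subset_associatedPrimes R _ hq
  obtain ⟨hqpr, ⟨z, hz⟩, hqz⟩ := isAssociatedPrime_iff.1 hq'
  have hqz' : ∀ r, r ∈ q ↔ r • z = 0 := by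
    intro r
    rw [hqz, Submodule.mem_colon_singleton, Submodule.mem_bot]
    exact ⟨fun h => congrArg Subtype.val h, fun h => Subtype.ext h⟩
  have hqs : (⟨q, hqpr⟩ : PrimeSpectrum R) ∈ Module.support R Y :=
    Module.mem_support_iff_exists_annihilator.2 ⟨z, fun r hr =>
      (hqz' r).2 ((Submodule.mem_annihilator_span_singleton _ _).1 hr)⟩
  have heq := chain2 hd hqs (q := p) hqp hnm
  have heq' : q = p.asIdeal := congrArg PrimeSpectrum.asIdeal heq
  rw [← heq']
  obtain ⟨k, hk⟩ := ht z
  have haq : a ≤ q := by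
    intro r hr
    exact hqpr.mem_of_pow_mem k ((hqz' _).2 (hk _ (Ideal.pow_mem_pow hr k)))
  refine isAssociatedPrime_iff.2 ⟨hqpr, ⟨z, fun r hr => (hqz' r).1 (haq hr)⟩, ?_⟩
  ext r
  rw [hqz' r, Submodule.mem_colon_singleton, Submodule.mem_bot]
  exact ⟨fun h => Subtype.ext h, fun h => congrArg Subtype.val h⟩

lemma loc_art (T : Submonoid R) {Y : Type u} [AddCommGroup Y] [Module R Y] (ht : Tor a Y)
    (h0 : EF a 0 Y) (hP : ∀ P : Ideal (Localization T), ∀ hp : P.IsPrime,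
      (⟨P.comap (algebraMap R (Localization T)), hp.comap _⟩ : PrimeSpectrum R) ∈ Module.support R Y →
      P.IsMaximal) :
    IsArtinian (Localization T) (LocalizedModule T Y) := by
  have : IsNoetherianRing (Localization T) := IsLocalization.isNoetherianRing T _ inferInstance
  let A := Localization T
  let ι := LocalizedModule.mkLinearMap T Y
  refine artin_ideal (a.map (algebraMap R A)) (IsNoetherian.noetherian _) ?_ (art_of_dim0 _ ?_ ?_)
  · intro z
    obtain ⟨⟨y, s⟩, hz⟩ := IsLocalizedModule.surj T ι z
    obtain ⟨k, hk⟩ := ht y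
    refine ⟨k, fun r hr => ?_⟩
    rw [← Ideal.map_pow] at hr
    have hle : (a ^ k).map (algebraMap R A) ≤ LinearMap.ker (LinearMap.toSpanSingleton A _ z) := by
      refine Ideal.map_le_iff_le_comap.2 fun r hr => ?_
      change algebraMap R A r • z = 0
      rw [algebraMap_smul]
      have h1 : (s : R) • r • z = 0 := by
        rw [smul_comm]
        have : (s : R) • z = ι y := hz
        rw [this, ← map_smul, hk r hr, map_zero]
      exact IsLocalizedModule.smul_injective ι s (h1.trans (smul_zero (s : R)).symm)
    exact hle hr
  · obtain ⟨S, hS⟩ := Module.finite_def.1 (EF_zero_iff.1 h0)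
    let W : Submodule A (LocalizedModule T Y) :=
      Submodule.span A ((fun v : ann a Y => ι (v : Y)) '' (S : Set (ann a Y)))
    have hW : Module.Finite A W :=
      Module.Finite.iff_fg.2 (Submodule.fg_span (S.finite_toSet.image _))
    have hWmem : ∀ y ∈ ann a Y, ι y ∈ W := by
      intro y hy
      have : (⊤ : Submodule R (ann a Y)) ≤ (W.restrictScalars R).comap (ι ∘ₗ (ann a Y).subtype) := by
        rw [← hS]
        refine Submodule.span_le.2 fun v hv => ?_
        exact Submodule.subset_span ⟨v, hv, rfl⟩
      exact this (x := ⟨y, hy⟩) trivial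
    have hle : ann (a.map (algebraMap R A)) (LocalizedModule T Y) ≤ W := by
      intro z hz
      obtain ⟨⟨y, s⟩, hzs⟩ := IsLocalizedModule.surj T ι z
      have hzs' : (s : R) • z = ι y := hzs
      obtain ⟨t, htT, h⟩ := T_unif T a y (fun r hr => by
        have : ι (r • y) = 0 := by
          rw [map_smul, ← hzs', smul_comm, ← algebraMap_smul A r,
            hz _ (Ideal.mem_map_of_mem _ hr), smul_zero]
        obtain ⟨c, hc⟩ := (IsLocalizedModule.eq_zero_iff T ι).1 this
        exact ⟨c, c.2, hc⟩)
      have h1 : ι (t • y) ∈ W := hWmem _ h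
      rw [map_smul, ← hzs', smul_smul, ← algebraMap_smul A] at h1
      have hu : IsUnit (algebraMap R A (t * s)) :=
        IsLocalization.map_units A (⟨t * s, T.mul_mem htT s.2⟩ : T)
      obtain ⟨v, hv⟩ := hu
      rw [← hv] at h1
      have := W.smul_mem (↑v⁻¹ : A) h1
      rwa [smul_smul, Units.inv_mul, one_smul] at this
    have : IsNoetherian A W := isNoetherian_of_isNoetherianRing_of_finite A W
    exact Module.Finite.of_injective (Submodule.inclusion hle) (Submodule.inclusion_injective hle)
  · intro P hPs
    refine hP P.asIdeal P.isPrime ?_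
    obtain ⟨⟨z, _⟩, hz⟩ := Module.mem_support_iff'.1 hPs
    obtain ⟨⟨y, s⟩, hzs⟩ := IsLocalizedModule.surj T ι z
    have hzs' : (s : R) • z = ι y := hzs
    refine Module.mem_support_iff'.2 ⟨y, fun r hr hry => ?_⟩
    refine hz (algebraMap R A r) hr (Subtype.ext ?_)
    change algebraMap R A r • z = 0
    rw [algebraMap_smul]
    have h1 : (s : R) • r • z = 0 := by
      rw [smul_comm, hzs', ← map_smul, hry, map_zero]
    exact IsLocalizedModule.smul_injective ι s (h1.trans (smul_zero (s : R)).symm)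

theorem Stat1 (Y : Type u) [AddCommGroup Y] [Module R Y] (ht : Tor a Y)
    (hd : Order.krullDim (Module.support R Y) ≤ 1) (h0 : EF a 0 Y) (h1 : EF a 1 Y) : Cof a Y := by
  let N : Set (Ideal R) := {p | ∃ hp : p.IsPrime, (⟨p, hp⟩ : PrimeSpectrum R) ∈ Module.support R Y ∧
    ¬ p.IsMaximal}
  have hfin : N.Finite := by
    have : Module.Finite R (ann a Y) := EF_zero_iff.1 h0
    refine (associatedPrimes.finite R (ann a Y)).subset ?_
    rintro p ⟨hp, hps, hnm⟩
    exact nonmax_ass ht hd hps hnm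
  let T : Submonoid R :=
    { carrier := {t | ∀ p ∈ N, t ∉ p}
      one_mem' := fun p ⟨hp, _⟩ h => hp.ne_top ((Ideal.eq_top_iff_one p).2 h)
      mul_mem' := fun {x y} hx hy p hpN h => by
        obtain ⟨hp, _⟩ := id hpN
        rcases hp.mem_or_mem h with h | h
        · exact hx p hpN h
        · exact hy p hpN h }
  have hmax : ∀ p ∈ Module.support R Y, (∃ t ∈ T, t ∈ p.asIdeal) → p.asIdeal.IsMaximal := by
    rintro p hp ⟨t, htT, htp⟩
    by_contra hnm
    exact htT p.asIdeal ⟨p.isPrime, hp, hnm⟩ htp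
  refine Stat1_art T ⊥ Y ht ?_ hmax h0 h1
    (fun r hr y => by rw [(Submodule.mem_bot R).1 hr, zero_smul])
  refine loc_art T ht h0 fun P hPp hPs => ?_
  obtain ⟨P', hP', hle⟩ := Ideal.exists_le_maximal P hPp.ne_top
  have hP'p := hP'.isPrime
  have hp'p : (P'.comap (algebraMap R (Localization T))).IsPrime := hP'p.comap _
  have hsub : ((P'.comap (algebraMap R (Localization T)) : Ideal R) : Set R) ⊆ ⋃ p ∈ N, (p : Set R) := by
    intro r hr
    by_contra hcon
    have hrT : r ∈ T := fun p hp hrp => hcon (Set.mem_biUnion hp hrp)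
    exact hP'p.ne_top (Ideal.eq_top_of_isUnit_mem _ hr
      (IsLocalization.map_units (Localization T) (⟨r, hrT⟩ : T)))
  obtain ⟨q, hqN, hq⟩ := (Ideal.subset_union_prime_finite hfin (f := id) ⊥ ⊥
    (fun p hp _ _ => hp.1)).1 hsub
  obtain ⟨hqp, hqs, hqm⟩ := hqN
  have hc : P.comap (algebraMap R (Localization T)) ≤ P'.comap (algebraMap R (Localization T)) :=
    Ideal.comap_mono hle
  have e1 := congrArg PrimeSpectrum.asIdeal (chain2 hd hPs (q := ⟨q, hqp⟩) (hc.trans hq) hqm)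
  have e2 : P'.comap (algebraMap R (Localization T)) ≤ P.comap (algebraMap R (Localization T)) := by
    change P.comap _ = q at e1
    rw [e1]; exact hq
  have e3 : P' ≤ P := by
    rw [← IsLocalization.map_comap T (Localization T) P', ← IsLocalization.map_comap T (Localization T) P]
    exact Ideal.map_mono e2
  rw [le_antisymm hle e3]
  exact hP'

end
end OldNew
end

section
open CategoryTheory Abelian
namespace OldNew
variable {R : Type u} [CommRing R]
noncomputable section

variable [IsNoetherianRing R] {a : Ideal R}

section
variable {A B C : Type u} [AddCommGroup A] [Module R A] [AddCommGroup B] [Module R B]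
  [AddCommGroup C] [Module R C]

lemma fin_range_of_ker_le (ψ : A →ₗ[R] C) (hC : Module.Finite R C) (φ : A →ₗ[R] B)
    (h : LinearMap.ker ψ ≤ LinearMap.ker φ) : Module.Finite R (LinearMap.range φ) := by
  have h1 : Module.Finite R (A ⧸ LinearMap.ker ψ) :=
    fin_inj ((LinearMap.ker ψ).liftQ ψ le_rfl)
      (LinearMap.ker_eq_bot.1 (Submodule.ker_liftQ_eq_bot _ _ _ le_rfl)) hC
  have h2 : LinearMap.range ((LinearMap.ker ψ).liftQ φ h) = LinearMap.range φ :=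
    Submodule.range_liftQ _ _ _
  rw [← h2]
  exact Module.Finite.range _

lemma fin_mid' (f : A →ₗ[R] B) (g : B →ₗ[R] C) (h : Function.Exact f g)
    (hA : Module.Finite R (LinearMap.range f)) (hC : Module.Finite R C) : Module.Finite R B := by
  refine fin_mid (LinearMap.range f).subtype g (fun x => ?_) hA hC
  rw [h x]
  simp

end

lemma pow_torsion_of_gens {M : Type u} [AddCommGroup M] [Module R M] (m : M)
    (h : ∀ r ∈ a, r • m ∈ Gam a M) : m ∈ Gam a M := by
  obtain ⟨S, hS⟩ := (inferInstance : IsNoetherianRing R).noetherian a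
  have h1 : ∀ r : S, ∃ k : ℕ, ∀ s ∈ a ^ k, s • (r : R) • m = 0 := fun r =>
    h r (hS ▸ Ideal.subset_span r.2)
  choose κ hκ using h1
  let K := Finset.univ.sup κ
  refine ⟨K + 1, fun r hr => ?_⟩
  have h2 : ∀ s ∈ a ^ K, a ≤ LinearMap.ker (LinearMap.toSpanSingleton R M (s • m)) := by
    intro s hs
    rw [← hS]
    refine Submodule.span_le.2 fun r hr => ?_
    change r • s • m = 0
    rw [smul_comm]
    exact hκ ⟨r, hr⟩ s (Ideal.pow_le_pow_right (Finset.le_sup (Finset.mem_univ _)) hs)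
  have h3 : a ^ (K + 1) ≤ LinearMap.ker (LinearMap.toSpanSingleton R M m) := by
    rw [pow_succ]
    refine Ideal.mul_le.2 fun s hs r hr => ?_
    change (s * r) • m = 0
    rw [mul_comm, mul_smul]
    exact h2 s hs hr
  exact h3 hr

lemma EF_zero_quot_Gam (M : Type u) [AddCommGroup M] [Module R M] : EF a 0 (M ⧸ Gam a M) := by
  rw [EF_zero_iff]
  have : ∀ y : ann a (M ⧸ Gam a M), y = 0 := by
    rintro ⟨y, hy⟩
    apply Subtype.ext
    obtain ⟨m, rfl⟩ := Submodule.mkQ_surjective _ y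
    change Submodule.mkQ _ m = 0
    rw [Submodule.mkQ_apply, Submodule.Quotient.mk_eq_zero]
    apply pow_torsion_of_gens
    intro r hr
    rw [← Submodule.Quotient.mk_eq_zero, Submodule.Quotient.mk_smul]
    exact hy r hr
  have : Subsingleton (ann a (M ⧸ Gam a M)) := ⟨fun x y => by rw [this x, this y]⟩
  infer_instance

lemma EF_inj (Y : Type u) [AddCommGroup Y] [Module R Y] [Module.Injective R Y] (j : ℕ) :
    EF a (j+1) Y := by
  have : Subsingleton (EX (ModuleCat.of R (R ⧸ a)) Y (j+1)) :=
    ⟨fun x y => by rw [EX_inj _ _ _ x, EX_inj _ _ _ y]⟩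
  unfold EF
  infer_instance

/-- `Γ(M)/B` -/
abbrev GB (a : Ideal R) (M : Type u) [AddCommGroup M] [Module R M] (B : Submodule R M) : Type u :=
  Gam a M ⧸ B.comap (Gam a M).subtype

/-- Finiteness of the j-th Ext of the i-th modified local cohomology. -/
def HP (a : Ideal R) (M : Type u) [AddCommGroup M] [Module R M] (B : Submodule R M) (j : ℕ) :
    ℕ → Prop
  | 0 => EF a j (GB a M B)
  | i+1 => EF a j (DLL a (i+1) M)

section
variable {M : Type u} [AddCommGroup M] [Module R M] {B : Submodule R M}

lemma D_base (hB : B ≤ Gam a M) (hM1 : EF a 1 M) (h1 : EF a 1 B) (h2 : EF a 2 B)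
    (hq : Module.Finite R (ann a M ⧸ B.comap (ann a M).subtype)) :
    EF a 0 (GB a M B) ∧ EF a 1 (GB a M B) := by
  let B0 := B.comap (Gam a M).subtype
  let e : B0 ≃ₗ[R] B := Submodule.comapSubtypeEquivOfLe hB
  have h1' : EF a 1 B0 := EF_congr e.symm h1
  have h2' : EF a 2 B0 := EF_congr e.symm h2
  have hG : EF a 1 (Gam a M) := EF_left_q _ (EF_zero_quot_Gam M) hM1
  refine ⟨?_, EF_right_q B0 hG h2'⟩
  let X := ModuleCat.of R (R ⧸ a)
  refine fin_mid' (em X 0 B0.mkQ) _ (ex_right X (LinearMap.exact_subtype_mkQ B0) B0.subtype_injective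
    B0.mkQ_surjective 0) ?_ h1'
  let ψ : EX X (Gam a M) 0 →ₗ[R] (ann a M ⧸ B.comap (ann a M).subtype) :=
    Submodule.mkQ _ ∘ₗ LinearMap.codRestrict (ann a M) ((Gam a M).subtype ∘ₗ ev0 a (Gam a M))
      (fun x r hr => congrArg Subtype.val
        ((ev0_range a (Gam a M) (ev0 a (Gam a M) x)).1 ⟨x, rfl⟩ r hr))
  refine fin_range_of_ker_le ψ hq _ ?_
  intro x hx
  rw [LinearMap.mem_ker] at hx ⊢
  have hx' : ((ev0 a (Gam a M) x : Gam a M) : M) ∈ B := by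
    have := (Submodule.Quotient.mk_eq_zero _).1 hx
    exact this
  apply ev0_inj a
  rw [ev0_nat, map_zero]
  exact (Submodule.Quotient.mk_eq_zero _).2 hx'


section
variable {E L : Type u} [AddCommGroup E] [Module R E] [AddCommGroup L] [Module R L]
  {f : M →ₗ[R] E} {g : E →ₗ[R] L} (h : Function.Exact f g)
    (hf : Function.Injective f) (hg : Function.Surjective g)

omit [IsNoetherianRing R] in
lemma Gam_map_mem (f : M →ₗ[R] E) {m : M} (hm : m ∈ Gam a M) : f m ∈ Gam a E := by
  obtain ⟨k, hk⟩ := hm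
  exact ⟨k, fun r hr => by rw [← map_smul, hk r hr, map_zero]⟩

include h hf in
lemma D_EFB [Module.Injective R E] (j : ℕ) (hG : EF a (j+2) (Gam a M)) :
    EF a (j+1) ((Gam a E).map g) := by
  have := Gam_injective a E
  let f' : Gam a M →ₗ[R] Gam a E := f.restrict (fun m hm => Gam_map_mem f hm)
  let g' : Gam a E →ₗ[R] (Gam a E).map g := g.submoduleMap (Gam a E)
  have hg' : Function.Surjective g' := g.submoduleMap_surjective (Gam a E)
  have hf' : Function.Injective f' := fun x y hxy =>
    Subtype.ext (hf (congrArg Subtype.val hxy))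
  have hex : Function.Exact f' g' := by
    rintro ⟨e, he⟩
    constructor
    · intro hx
      have h0 : g e = 0 := congrArg Subtype.val hx
      obtain ⟨m, rfl⟩ := (h e).1 h0
      obtain ⟨k, hk⟩ := he
      refine ⟨⟨m, k, fun r hr => hf ?_⟩, rfl⟩
      rw [map_smul, hk r hr, map_zero]
    · rintro ⟨m, hm⟩
      apply Subtype.ext
      change g e = 0
      exact (h e).2 ⟨m, congrArg Subtype.val hm⟩
  exact EF_right hex hf' hg' (EF_inj _ j) hG

include h hf hg in
lemma D_quot (hM : EF a 1 M) :
    Module.Finite R (ann a L ⧸ ((Gam a E).map g).comap (ann a L).subtype) := by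
  let X := ModuleCat.of R (R ⧸ a)
  let φ : EX X L 0 →ₗ[R] (ann a L ⧸ ((Gam a E).map g).comap (ann a L).subtype) :=
    Submodule.mkQ _ ∘ₗ LinearMap.codRestrict (ann a L) (ev0 a L)
      (fun x => (ev0_range a L (ev0 a L x)).1 ⟨x, rfl⟩)
  have hφ : Function.Surjective φ := by
    refine (Submodule.mkQ_surjective _).comp ?_
    rintro ⟨y, hy⟩
    obtain ⟨x, hx⟩ := (ev0_range a L y).2 hy
    exact ⟨x, Subtype.ext hx⟩
  have h1 : Module.Finite R (LinearMap.range φ) := by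
    refine fin_range_of_ker_le (dl X h hf hg 0) hM φ ?_
    intro x hx
    obtain ⟨y, rfl⟩ := (ex_right X h hf hg 0 x).1 hx
    rw [LinearMap.mem_ker]
    refine (Submodule.Quotient.mk_eq_zero _).2 ?_
    change ev0 a L (em X 0 g y) ∈ (Gam a E).map g
    rw [ev0_nat]
    refine ⟨_, ⟨1, fun r hr => ?_⟩, rfl⟩
    rw [pow_one] at hr
    exact (ev0_range a E _).1 ⟨y, rfl⟩ r hr
  rw [LinearMap.range_eq_top.2 hφ] at h1
  exact Module.Finite.equiv Submodule.topEquiv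

include h hf hg in
lemma HP_shift [Module.Injective R E] (j i : ℕ) :
    HP a L ((Gam a E).map g) j i ↔ HP a M B j (i+1) := by
  cases i with
  | zero =>
    obtain ⟨e⟩ := DLL_one h hf hg a
    exact ⟨EF_congr e, EF_congr e.symm⟩
  | succ i =>
    obtain ⟨e⟩ := DLL_shift h hf hg a i
    exact ⟨EF_congr e, EF_congr e.symm⟩

end
end

theorem D_main (t : ℕ) : ∀ (M : Type u) [AddCommGroup M] [Module R M] (B : Submodule R M),
    B ≤ Gam a M → (∀ j, EF a (j+1) M) → (∀ j, EF a (j+1) B) →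
    Module.Finite R (ann a M ⧸ B.comap (ann a M).subtype) →
    (∀ i < t, ∀ j, HP a M B j i) → HP a M B 0 t ∧ HP a M B 1 t := by
  induction t with
  | zero =>
    intro M _ _ B hB hM hBj hq _
    exact D_base hB (hM 0) (hBj 0) (hBj 1) hq
  | succ t ih =>
    intro M _ _ B hB hM hBj hq hH
    let E := Injective.under (ModuleCat.of R M)
    let f : M →ₗ[R] E := (Injective.ι (ModuleCat.of R M)).hom
    have hf : Function.Injective f := (ModuleCat.mono_iff_injective _).1
      (inferInstance : Mono (Injective.ι (ModuleCat.of R M)))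
    have hE0 : Injective (ModuleCat.of R E) :=
      (inferInstance : Injective (Injective.under (ModuleCat.of R M)))
    have hE : Module.Injective R E := Module.injective_module_of_injective_object R E (inj := hE0)
    let g : E →ₗ[R] (E ⧸ LinearMap.range f) := (LinearMap.range f).mkQ
    have hg : Function.Surjective g := Submodule.mkQ_surjective _
    have h : Function.Exact f g := LinearMap.exact_map_mkQ_range f
    have hGM : ∀ j, EF a (j+1) (Gam a M) := fun j =>
      EF_mid_q (B.comap (Gam a M).subtype)
        (EF_congr (Submodule.comapSubtypeEquivOfLe hB).symm (hBj j)) (hH 0 (Nat.succ_pos t) (j+1))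
    have := ih (E ⧸ LinearMap.range f) ((Gam a E).map g)
      (by rintro _ ⟨e, he, rfl⟩; exact Gam_map_mem g he)
      (fun j => EF_right h hf hg (EF_inj E j) (hM (j+1)))
      (fun j => D_EFB h hf j (hGM (j+1)))
      (D_quot h hf hg (hM 0))
      (fun i hi j => (HP_shift (B := B) h hf hg j i).2 (hH (i+1) (by omega) j))
    rwa [HP_shift (B := B) h hf hg, HP_shift (B := B) h hf hg] at this

lemma HP_bot_iff {M : Type u} [AddCommGroup M] [Module R M] (j i : ℕ) :
    HP a M ⊥ j i ↔ EF a j (DLL a i M) := by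
  cases i with
  | zero =>
    have h0 : (⊥ : Submodule R M).comap (Gam a M).subtype = ⊥ := by
      rw [Submodule.comap_bot, Submodule.ker_subtype]
    let e : GB a M ⊥ ≃ₗ[R] DLL a 0 M :=
      (Submodule.quotEquivOfEqBot _ h0) ≪≫ₗ (dl0Equiv a M).symm
    exact ⟨EF_congr e, EF_congr e.symm⟩
  | succ i => exact Iff.rfl

/-- main inductive statement for a finitely generated module -/
theorem D_final (M : Type u) [AddCommGroup M] [Module R M] (hM : Module.Finite R M) (t : ℕ)
    (h : ∀ i < t, Cof a (DLL a i M)) : EF a 0 (DLL a t M) ∧ EF a 1 (DLL a t M) := by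
  have := isNoetherian_of_isNoetherianRing_of_finite R M
  have := D_main (a := a) t M ⊥ bot_le (fun j => EF_fg _ hM) (fun j => EF_fg _ inferInstance)
    inferInstance (fun i hi j => (HP_bot_iff j i).2 (h i hi j))
  rwa [HP_bot_iff, HP_bot_iff] at this

end
end OldNew
end

section
open CategoryTheory Abelian
namespace OldNew
variable {R : Type u} [CommRing R]
noncomputable section
variable [IsNoetherianRing R] {a : Ideal R}

theorem cof_lt (n : ℕ) (hn : n ≤ 1) (M : ModuleCat.{u} R) (hfg : Module.Finite R M) (t : ℕ)
    (hFD : ∀ i < t, ∃ N : Submodule R ((localCohomology a i).obj M), N.FG ∧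
      Order.krullDim (Module.support R (((localCohomology a i).obj M) ⧸ N)) ≤
        (n : WithBot (WithTop ℕ))) : ∀ i < t, Cof a (DLL a i M) := by
  intro i
  induction i using Nat.strong_induction_on with
  | _ i ih =>
  intro hi
  obtain ⟨h0, h1⟩ := D_final (a := a) M hfg i (fun k hk => ih k hk (hk.trans hi))
  obtain ⟨e⟩ := lc_equiv a i M
  obtain ⟨N, hN, hd⟩ := hFD i hi
  let H := (localCohomology a i).obj M
  have hH0 : EF a 0 H := EF_congr (A := DLL a i M) e.symm h0
  have hH1 : EF a 1 H := EF_congr (A := DLL a i M) e.symm h1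
  have hNf : Module.Finite R N := Module.Finite.iff_fg.2 hN
  have hNC : Cof a N := fun j => EF_fg j hNf
  have htor : Tor a H := Tor_inj (Y := DLL a i M) e.toLinearMap e.injective (DLL_torsion a i M)
  have hd' : Order.krullDim (Module.support R (H ⧸ N)) ≤ 1 := by
    refine hd.trans ?_
    obtain rfl | rfl : n = 0 ∨ n = 1 := by omega
    · exact (by decide : ((0 : ℕ) : WithBot (WithTop ℕ)) ≤ 1)
    · exact le_of_eq rfl
  have hQ : Cof a (H ⧸ N) := Stat1 _ (Tor_surj _ N.mkQ_surjective htor) hd'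
    (EF_right_q N hH0 (hNC 1)) (EF_right_q N hH1 (hNC 2))
  intro j
  exact EF_congr (A := H) (B := DLL a i M) e (EF_mid_q N (hNC j) (hQ j))

theorem final (n : ℕ) (hn : n ≤ 1) (M : ModuleCat.{u} R) (hfg : Module.Finite R M) (t : ℕ)
    (hFD : ∀ i < t, ∃ N : Submodule R ((localCohomology a i).obj M), N.FG ∧
      Order.krullDim (Module.support R (((localCohomology a i).obj M) ⧸ N)) ≤
        (n : WithBot (WithTop ℕ))) (j : ℕ) (hj : j ≤ n) :
    Module.Finite R (((_root_.Ext R (ModuleCat.{u} R) j).obj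
      (Opposite.op (ModuleCat.of R (R ⧸ a)))).obj ((localCohomology a t).obj M)) := by
  obtain ⟨h0, h1⟩ := D_final (a := a) M hfg t (cof_lt n hn M hfg t hFD)
  obtain ⟨e⟩ := lc_equiv a t M
  let H := (localCohomology a t).obj M
  have hH : EF a j H := by
    obtain rfl | rfl : j = 0 ∨ j = 1 := by omega
    · exact EF_congr (A := DLL a t M) e.symm h0
    · exact EF_congr (A := DLL a t M) e.symm h1
  have hH' : Module.Finite R (NExt (ModuleCat.of R (R ⧸ a)) H j) := hH
  exact Module.Finite.equiv (oldNew (PR (ModuleCat.of R (R ⧸ a))) H j).symm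

end
end OldNew
end

theorem stmt12 {R : Type u} [CommRing R] [IsNoetherianRing R] (a : Ideal R)
    (n : ℕ) (hn : n ≤ 1) (M : ModuleCat.{u} R) (hM : Nontrivial M)
    (hfg : Module.Finite R M) (t : ℕ)
    (hFD : ∀ i < t, ∃ N : Submodule R ((localCohomology a i).obj M), N.FG ∧
      Order.krullDim (Module.support R (((localCohomology a i).obj M) ⧸ N)) ≤
        (n : WithBot (WithTop ℕ))) :
    ∀ j ≤ n, Module.Finite R (extQuot a j ((localCohomology a t).obj M)) := by
  exact fun j hj => OldNew.final n hn M hfg t hFD j hj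
end

section
/- Let R be a commutative noetherian ring with identity, a an ideal of R, and M an a-torsion R-module with dim_R M ≤ 2. If Hom_R(R/a, M) is finitely generated, then for every prime ideal p in the set T_M = {p ∈ Supp_R M | dim R/p = 2}, the localization M_p is an artinian R_p-module. -/
universe u

open CategoryTheory

universe v w

theorem art_principal {A : Type v} {N : Type w} [CommRing A] [AddCommGroup N] [Module A N] (x : A)
    (htor : ∀ m : N, ∃ n : ℕ, x ^ n • m = 0)
    (h : IsArtinian A (Submodule.torsionBy A N x)) : IsArtinian A N := by
  rw [← monotone_stabilizes_iff_artinian]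
  intro f
  let N' : ℕ → Submodule A N := fun i => OrderDual.ofDual (f i)
  have hN : ∀ i j, i ≤ j → N' j ≤ N' i := fun i j hij => f.monotone hij
  let L : ℕ → ℕ → Submodule A (Submodule.torsionBy A N x) := fun i n =>
    ((N' i).map (LinearMap.lsmul A N (x ^ n))).comap (Submodule.subtype _)
  have hL : ∀ i n y, y ∈ L i n ↔ ∃ m ∈ N' i, x ^ n • m = (y : N) := by
    intro i n y
    simp [L]
  have hLi : ∀ i j n, i ≤ j → L j n ≤ L i n := by
    intro i j n hij y hy
    rw [hL] at hy ⊢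
    obtain ⟨m, hm, e⟩ := hy
    exact ⟨m, hN i j hij hm, e⟩
  have hLn : ∀ i n k, n ≤ k → L i k ≤ L i n := by
    intro i n k hnk y hy
    rw [hL] at hy ⊢
    obtain ⟨m, hm, e⟩ := hy
    refine ⟨x ^ (k - n) • m, (N' i).smul_mem _ hm, ?_⟩
    rw [smul_smul, ← pow_add, Nat.add_sub_cancel' hnk, e]
  have stab : ∀ g : ℕ → Submodule A (Submodule.torsionBy A N x), (∀ i j, i ≤ j → g j ≤ g i) →
      ∃ n, ∀ m, n ≤ m → g n = g m := by
    intro g hg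
    exact IsArtinian.monotone_stabilizes (R := A)
      ⟨fun i => OrderDual.toDual (g i), fun i j hij => hg i j hij⟩
  obtain ⟨k, hk⟩ := stab (fun i => L i i) (fun i j hij => (hLi i j j hij).trans (hLn i i j hij))
  choose s hs using fun n => stab (fun i => L i n) (fun i j hij => hLi i j n hij)
  let i0 := k + (Finset.range k).sup s
  have key : ∀ i, i0 ≤ i → ∀ n, L i0 n ≤ L i n := by
    intro i hi n
    by_cases hn : n < k
    · have h1 : s n ≤ i0 :=
        (Finset.le_sup (f := s) (Finset.mem_range.2 hn)).trans (Nat.le_add_left _ _)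
      exact ((hs n i0 h1).symm.trans (hs n i (h1.trans hi))).le
    · push Not at hn
      have h1 : k ≤ i0 := Nat.le_add_right _ _
      calc L i0 n ≤ L k n := hLi _ _ _ h1
        _ ≤ L k k := hLn _ _ _ hn
        _ = L (max i n) (max i n) := hk _ (hn.trans (le_max_right _ _))
        _ ≤ L i (max i n) := hLi _ _ _ (le_max_left _ _)
        _ ≤ L i n := hLn _ _ _ (le_max_right _ _)
  refine ⟨i0, fun i hi => ?_⟩
  have goal : N' i0 ≤ N' i := by
    have : ∀ n, ∀ m ∈ N' i0, x ^ n • m = 0 → m ∈ N' i := by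
      intro n
      induction n with
      | zero => intro m _ h0; simp at h0; rw [h0]; exact zero_mem _
      | succ n ih =>
        intro m hm h0
        have hy : x ^ n • m ∈ Submodule.torsionBy A N x := by
          rw [Submodule.mem_torsionBy_iff, smul_smul, ← pow_succ', h0]
        have := key i hi n ((hL i0 n ⟨_, hy⟩).2 ⟨m, hm, rfl⟩)
        obtain ⟨m', hm', e⟩ := (hL _ _ _).1 this
        have h2 := ih (m - m') (sub_mem hm (hN _ _ hi hm')) (by rw [smul_sub, e, sub_self])
        simpa using add_mem h2 hm'
    intro m hm
    obtain ⟨n, hn⟩ := htor m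
    exact this n m hm hn
  exact le_antisymm (α := Submodule A N) goal (hN _ _ hi) 

theorem art_finset {A : Type v} [CommRing A] (s : Finset A) :
    ∀ {N : Type w} [AddCommGroup N] [Module A N]
    (_ : ∀ x ∈ s, ∀ m : N, ∃ n : ℕ, x ^ n • m = 0)
    (_ : IsArtinian A (Submodule.torsionBySet A N (s : Set A))), IsArtinian A N := by
  classical
  induction s using Finset.induction_on with
  | empty =>
    intro N _ _ _ h
    have : Submodule.torsionBySet A N ((∅ : Finset A) : Set A) = ⊤ := by
      ext; simp [Submodule.mem_torsionBySet_iff]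
    rw [this] at h
    exact isArtinian_of_linearEquiv Submodule.topEquiv
  | insert x s _ ih =>
    intro N _ _ ht h
    refine art_principal x (ht x (by simp)) (ih ?_ ?_)
    · intro y hy m
      obtain ⟨n, hn⟩ := ht y (by simp [hy]) (m : N)
      exact ⟨n, Subtype.ext (by simpa using hn)⟩
    · let φ : Submodule.torsionBySet A (Submodule.torsionBy A N x) (s : Set A) →ₗ[A]
        Submodule.torsionBySet A N ((insert x s : Finset A) : Set A) :=
        ((Submodule.subtype _).comp (Submodule.subtype _)).codRestrict _ (by
          rintro ⟨⟨m, hm⟩, hm'⟩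
          rw [Submodule.mem_torsionBySet_iff] at hm' ⊢
          rintro ⟨y, hy⟩
          rcases Finset.mem_insert.1 (Finset.mem_coe.1 hy) with rfl | hy
          · simpa using hm
          · simpa using congrArg Subtype.val (hm' ⟨y, hy⟩))
      refine isArtinian_of_injective φ ?_
      intro u v huv
      have h3 : ((φ u : _) : N) = (φ v : _) := congrArg Subtype.val huv
      exact Subtype.ext (Subtype.ext h3)

theorem ext_gen {R : Type u} [CommRing R] [IsNoetherianRing R] (a : Ideal R)
    (M : ModuleCat.{u} R)
    (hhom : Module.Finite R (((Ext R (ModuleCat.{u} R) 0).obj (Opposite.op (ModuleCat.of R (R ⧸ a)))).obj M)) :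
    ∃ G : Finset M, ∀ m : M, (∀ r ∈ a, r • m = 0) → m ∈ Submodule.span R (G : Set M) := by
  let F := (linearYoneda R (ModuleCat.{u} R)).obj M
  have : Limits.PreservesLimits (F ⋙ forget (ModuleCat.{u} R)) :=
    inferInstanceAs (Limits.PreservesLimits (yoneda.obj M))
  have : Limits.PreservesLimits F := Limits.preservesLimits_of_reflects_of_preserves F (forget _)
  have : Limits.PreservesFiniteColimits F.rightOp := Limits.preservesFiniteColimits_rightOp F
  let e : ((Ext R (ModuleCat.{u} R) 0).obj (Opposite.op (ModuleCat.of R (R ⧸ a)))).obj M ≅ 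
      F.obj (Opposite.op (ModuleCat.of R (R ⧸ a))) :=
    (F.rightOp.leftDerivedZeroIsoSelf.app (ModuleCat.of R (R ⧸ a))).unop.symm
  have : Module.Finite R (F.obj (Opposite.op (ModuleCat.of R (R ⧸ a)))) :=
    Module.Finite.equiv e.toLinearEquiv
  let ev : (ModuleCat.of R (R ⧸ a) ⟶ M) →ₗ[R] M :=
    { toFun := fun φ => φ.hom (Ideal.Quotient.mk a 1)
      map_add' := fun _ _ => rfl
      map_smul' := fun _ _ => rfl }
  have : Module.Finite R (ModuleCat.of R (R ⧸ a) ⟶ M) := this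
  obtain ⟨G, hG⟩ := (Submodule.fg_top (LinearMap.range ev)).1 (Module.Finite.range ev).fg_top
  refine ⟨G, fun m hm => ?_⟩
  rw [hG]
  refine ⟨ModuleCat.ofHom (a.liftQ (LinearMap.toSpanSingleton R M m) ?_), ?_⟩
  · intro r hr
    change r • m = 0
    exact hm r hr
  · change LinearMap.toSpanSingleton R M m 1 = m
    exact one_smul R m

theorem supp_min {R : Type u} [CommRing R] {M : Type w} [AddCommGroup M] [Module R M]
    (hdim : Order.krullDim (Module.support R M) ≤ 2) (p q : PrimeSpectrum R)
    (hp : p ∈ Module.support R M) (h2 : ringKrullDim (R ⧸ p.asIdeal) = 2)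
    (hq : q ∈ Module.support R M) (hqp : q ≤ p) : q = p := by
  by_contra hne
  have hlt : q < p := lt_of_le_of_ne hqp hne
  rw [ringKrullDim_quotient] at h2
  obtain ⟨l, hl⟩ := (Order.le_krullDim_iff (n := 2)).1 h2.ge
  let f : PrimeSpectrum.zeroLocus (p.asIdeal : Set R) → Module.support R M :=
    fun z => ⟨z.1, Module.mem_support_mono (p := p) z.2 hp⟩
  have hf : StrictMono f := fun x y hxy => hxy
  let l' := (l.map f hf).cons ⟨q, hq⟩ (lt_of_lt_of_le hlt (show p ≤ _ from l.head.2))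
  have := (Order.le_krullDim_iff (n := 3)).2 ⟨l', by simp [l', hl]⟩
  have h3 := this.trans hdim
  exact absurd h3 (by decide)

theorem cyc_art {R : Type u} [CommRing R] [IsNoetherianRing R] {M : Type w} [AddCommGroup M]
    [Module R M] (p : PrimeSpectrum R)
    (hmin : ∀ q ∈ Module.support R M, q ≤ p → q = p) (m : M) :
    IsArtinian (Localization.AtPrime p.asIdeal) (Submodule.span (Localization.AtPrime p.asIdeal)
      {LocalizedModule.mkLinearMap p.asIdeal.primeCompl M m}) := by
  set A := Localization.AtPrime p.asIdeal
  set y := LocalizedModule.mkLinearMap p.asIdeal.primeCompl M m with hy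
  let g := LinearMap.toSpanSingleton A (LocalizedModule p.asIdeal.primeCompl M) y
  let I : Ideal A := LinearMap.ker g
  have hN : IsNoetherianRing A := IsLocalization.isNoetherianRing p.asIdeal.primeCompl A inferInstance
  have hA : IsArtinianRing (A ⧸ I) := by
    rw [isArtinianRing_iff_krullDimLE_zero, Ring.krullDimLE_zero_iff]
    intro P hP
    have hsur : Function.Surjective (Ideal.Quotient.mk I) := Ideal.Quotient.mk_surjective
    let Q : Ideal A := P.comap (Ideal.Quotient.mk I)
    have hIQ : I ≤ Q := fun z hz => by
      change Ideal.Quotient.mk I z ∈ P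
      rw [Ideal.Quotient.eq_zero_iff_mem.2 hz]; exact zero_mem _
    let q : PrimeSpectrum R := ⟨Q.comap (algebraMap R A), inferInstance⟩
    have hq : q ∈ Module.support R M := by
      rw [Module.mem_support_iff_exists_annihilator]
      refine ⟨m, fun r hr => hIQ ?_⟩
      rw [Submodule.mem_annihilator_span_singleton] at hr
      change algebraMap R A r • y = 0
      rw [algebraMap_smul, hy, ← map_smul, hr, map_zero]
    have hqp : q ≤ p := by
      have : Q ≤ IsLocalRing.maximalIdeal A := IsLocalRing.le_maximalIdeal (Ideal.IsPrime.ne_top inferInstance)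
      have h := Ideal.comap_mono (f := algebraMap R A) this
      exact h.trans (Localization.AtPrime.under_maximalIdeal).le
    have he : Q.comap (algebraMap R A) = p.asIdeal := congrArg PrimeSpectrum.asIdeal (hmin q hq hqp)
    have hQ : Q = IsLocalRing.maximalIdeal A := by
      rw [← IsLocalization.map_under p.asIdeal.primeCompl A Q,
        ← IsLocalization.map_under p.asIdeal.primeCompl A (IsLocalRing.maximalIdeal A)]
      congr 1
      exact he.trans (Localization.AtPrime.under_maximalIdeal).symm
    have hQm : Q.IsMaximal := hQ ▸ inferInstance
    rw [← Ideal.map_comap_of_surjective _ hsur P]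
    refine (Ideal.map_eq_top_or_isMaximal_of_surjective _ hsur hQm).resolve_left ?_
    rw [Ideal.map_comap_of_surjective _ hsur P]
    exact hP.ne_top
  have h1 : IsArtinian A (A ⧸ I) :=
    isArtinian_of_surjective_algebraMap (R := A ⧸ I) (Ideal.Quotient.mk_surjective (I := I))
  have h2 : IsArtinian A (LinearMap.range g) := isArtinian_of_linearEquiv g.quotKerEquivRange
  rwa [LinearMap.range_toSpanSingleton] at h2

theorem main' {R : Type u} [CommRing R] [IsNoetherianRing R] (a : Ideal R)
    {M : Type u} [AddCommGroup M] [Module R M]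
    (htor : ∀ m : M, ∃ n : ℕ, ∀ r ∈ a ^ n, r • m = 0)
    (p : PrimeSpectrum R)
    (hmin : ∀ q ∈ Module.support R M, q ≤ p → q = p)
    (G : Finset M) (hG : ∀ m : M, (∀ r ∈ a, r • m = 0) → m ∈ Submodule.span R (G : Set M)) :
    IsArtinian (Localization.AtPrime p.asIdeal)
          (LocalizedModule p.asIdeal.primeCompl M) := by
  classical
  obtain ⟨s, hs⟩ := (isNoetherianRing_iff_ideal_fg R).1 inferInstance a
  have hsa : ∀ x ∈ s, x ∈ a := fun x hx => hs ▸ Ideal.subset_span hx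
  refine art_finset (s.image (algebraMap R (Localization.AtPrime p.asIdeal))) ?_ ?_
  · intro x hx y
    obtain ⟨r, hr, rfl⟩ := Finset.mem_image.1 hx
    induction y using LocalizedModule.induction_on with
    | h m t =>
      obtain ⟨n, hn⟩ := htor m
      refine ⟨n, ?_⟩
      rw [← map_pow, algebraMap_smul, LocalizedModule.smul'_mk,
        hn _ (Ideal.pow_mem_pow (hsa r hr) n), LocalizedModule.zero_mk]
  · let A := Localization.AtPrime p.asIdeal
    let f := LocalizedModule.mkLinearMap p.asIdeal.primeCompl M
    let T : Submodule A (LocalizedModule p.asIdeal.primeCompl M) :=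
      ⨆ g : G, Submodule.span A {f g}
    have hc : ∀ g : G, IsArtinian A (Submodule.span A {f g}) := fun g => cyc_art p hmin g
    have hT : IsArtinian A T := isArtinian_iSup
    have hGT : ∀ m ∈ Submodule.span R (G : Set M), f m ∈ T := by
      intro m hm
      have : Submodule.span R (G : Set M) ≤ (T.restrictScalars R).comap f := by
        rw [Submodule.span_le]
        intro g hg
        exact (le_iSup (fun g : G => Submodule.span A {f g}) ⟨g, hg⟩)
          (Submodule.mem_span_singleton_self _)
      exact this hm
    refine isArtinian_of_le (t := T) ?_
    intro y hy
    rw [Submodule.mem_torsionBySet_iff] at hy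
    induction y using LocalizedModule.induction_on with
    | h m t =>
      have h1 : ∀ x : s, ∃ c : p.asIdeal.primeCompl, c • (x : R) • m = 0 := by
        intro x
        have := hy ⟨algebraMap R A x, by
          simpa using ⟨x.1, x.2, rfl⟩⟩
        change algebraMap R A x • LocalizedModule.mk m t = 0 at this
        rw [algebraMap_smul, LocalizedModule.smul'_mk, ← LocalizedModule.zero_mk 1,
          LocalizedModule.mk_eq] at this
        obtain ⟨c, hc⟩ := this
        exact ⟨c, by simpa using hc⟩
      choose c hc using h1
      let d : p.asIdeal.primeCompl := ∏ x : s, c x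
      have hd : ∀ x ∈ s, x • d • m = 0 := by
        intro x hx
        have hdv : c ⟨x, hx⟩ ∣ d := Finset.dvd_prod_of_mem c (Finset.mem_univ _)
        obtain ⟨e, he⟩ := hdv
        rw [smul_comm, he, mul_comm, mul_smul, hc ⟨x, hx⟩, smul_zero]
      have hda : ∀ r ∈ a, r • d • m = 0 := by
        intro r hr
        have : a ≤ (Submodule.span R {d • m}).annihilator := by
          rw [← hs, Ideal.span_le]
          intro x hx
          exact (Submodule.mem_annihilator_span_singleton _ _).2 (hd x hx)
        exact (Submodule.mem_annihilator_span_singleton _ _).1 (this hr)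
      have h3 := T.smul_mem (Localization.mk 1 (d * t)) (hGT _ (hG _ hda))
      have h4 : Localization.mk 1 (d * t) • f (d • m) = LocalizedModule.mk m t := by
        change Localization.mk 1 (d * t) • LocalizedModule.mk (d • m) 1 = _
        rw [LocalizedModule.mk_smul_mk, one_smul, mul_one, LocalizedModule.mk_cancel_common_left]
      rwa [h4] at h3

theorem stmt13 {R : Type u} [CommRing R] [IsNoetherianRing R] (a : Ideal R)
    (M : ModuleCat.{u} R)
    (htor : ∀ m : M, ∃ n : ℕ, ∀ r ∈ a ^ n, r • m = 0)
    (hdim : Order.krullDim (Module.support R M) ≤ 2)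
    (hhom : Module.Finite R (extQuot a 0 M)) :
    ∀ p : PrimeSpectrum R, p ∈ Module.support R M →
      ringKrullDim (R ⧸ p.asIdeal) = 2 →
        IsArtinian (Localization.AtPrime p.asIdeal)
          (LocalizedModule p.asIdeal.primeCompl M) := by
  intro p hp h2
  obtain ⟨G, hG⟩ := ext_gen a M hhom
  exact main' a htor p (fun q hq hqp => supp_min hdim p q hp h2 hq hqp) G hG
end

section
/- Let R be a commutative noetherian ring with identity and a an ideal of R with ara(a) ≤ 1. Then for every finitely generated R-module M, the local cohomology modules H^0_a(M) and H^1_a(M) are a-cofinite, and H^i_a(M) = 0 for all i ≥ 2. -/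
universe u

open CategoryTheory

open CategoryTheory Limits Abelian Opposite

namespace LC

section HomologyOp
variable {R : Type u} [CommRing R] (K : ChainComplex (ModuleCat.{u} R)ᵒᵖ ℕ) (n : ℕ)

lemma zsurj : Function.Surjective (K.homologyι n).unop.hom :=
  (ModuleCat.epi_iff_surjective _).1 inferInstance

lemma jinj : Function.Injective (K.pOpcycles n).unop.hom :=
  (ModuleCat.mono_iff_injective _).1 inferInstance

lemma jrange (x : (K.X n).unop) (hx : (K.d (n+1) n).unop.hom x = 0) :
    ∃ z, (K.pOpcycles n).unop.hom z = x := by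
  let S := ShortComplex.mk (K.d (n+1) n) (K.pOpcycles n) (by simp)
  have hS : S.Exact := ShortComplex.exact_of_g_is_cokernel _
    (K.opcyclesIsCokernel (n+1) n (by simp))
  have := (ShortComplex.moduleCat_exact_iff _).1 hS.unop
  exact this x hx

lemma jd (z : (K.opcycles n).unop) : (K.d (n+1) n).unop.hom ((K.pOpcycles n).unop.hom z) = 0 := by
  have : (K.pOpcycles n).unop ≫ (K.d (n+1) n).unop = 0 := by
    rw [← unop_comp]; simp
  rw [← LinearMap.comp_apply, ← ModuleCat.hom_comp, this]; simp

lemma zker (z : (K.opcycles n).unop) : (K.homologyι n).unop.hom z = 0 ↔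
    ∃ y, (K.d n ((ComplexShape.down ℕ).next n)).unop.hom y = (K.pOpcycles n).unop.hom z := by
  let S := ShortComplex.mk (K.homologyι n) (K.fromOpcycles n ((ComplexShape.down ℕ).next n))
    (by simp)
  have hS : S.Exact := ShortComplex.exact_of_f_is_kernel _
    (K.homologyIsKernel n _ rfl)
  have := (ShortComplex.moduleCat_exact_iff _).1 hS.unop
  have hc : (K.fromOpcycles n ((ComplexShape.down ℕ).next n)).unop ≫ (K.pOpcycles n).unop =
    (K.d n ((ComplexShape.down ℕ).next n)).unop := by
    rw [← unop_comp]; simp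
  constructor
  · intro h
    obtain ⟨y, hy⟩ := this z h
    refine ⟨y, ?_⟩
    rw [← hc, ← hy]; rfl
  · rintro ⟨y, hy⟩
    have : (K.fromOpcycles n ((ComplexShape.down ℕ).next n)).unop.hom y = z := by
      apply jinj
      rw [← hy, ← hc]; rfl
    rw [← this]
    have h2 : (K.fromOpcycles n ((ComplexShape.down ℕ).next n)).unop ≫ (K.homologyι n).unop = 0 := by
      rw [← unop_comp]; simp
    rw [← LinearMap.comp_apply, ← ModuleCat.hom_comp, h2]; simp

end HomologyOp

section Cmp
variable {R : Type u} [CommRing R] {X : ModuleCat.{u} R} (P : ProjectiveResolution X)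
  (n : ℕ) (Y : ModuleCat.{u} R)

lemma extMk_zero_iff (f : P.complex.X n ⟶ Y) (hf : P.complex.d (n+1) n ≫ f = 0) :
    P.extMk f (n+1) rfl hf = 0 ↔
      ∃ g : P.complex.X ((ComplexShape.down ℕ).next n) ⟶ Y, P.complex.d n _ ≫ g = f := by
  rcases n with _ | n
  · simp only [← P.extEquivCohomologyClass.apply_eq_iff_eq,
      ProjectiveResolution.extEquivCohomologyClass_extMk,
      ProjectiveResolution.extEquivCohomologyClass_zero,
      CochainComplex.HomComplex.CohomologyClass.mk_eq_zero_iff]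
    rw [CochainComplex.HomComplex.Cocycle.toSingleMk_mem_coboundaries_iff _ _ _ _ _ 1 (by simp)]
    have h0 : IsZero (P.cochainComplex.X 1) := P.cochainComplex.isZero_of_isStrictlyLE 0 1
    constructor
    · rintro ⟨g, hg⟩
      refine ⟨0, ?_⟩
      rw [h0.eq_of_src g 0] at hg
      simp only [comp_zero] at hg ⊢
      symm
      rw [← cancel_epi (P.cochainComplexXIso (-(0:ℕ)) 0 rfl).hom]
      simpa using hg.symm
    · rintro ⟨g, hg⟩
      refine ⟨0, ?_⟩
      rw [P.complex.shape _ _ (by simp)] at hg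
      simp at hg
      simp [← hg]
  · have e : (ComplexShape.down ℕ).next (n+1) = n := by simp
    rw [P.extMk_eq_zero_iff f (n+2) rfl hf n rfl]
    rw [e]

abbrev FK : ChainComplex (ModuleCat.{u} R)ᵒᵖ ℕ :=
  ((((linearYoneda R (ModuleCat.{u} R)).obj Y).rightOp).mapHomologicalComplex _).obj P.complex

noncomputable abbrev Z : ModuleCat.{u} R := ((FK P Y).opcycles n).unop

noncomputable def j : Z P n Y →ₗ[R] (P.complex.X n ⟶ Y) := ((FK P Y).pOpcycles n).unop.hom

lemma j_d (z : Z P n Y) : P.complex.d (n+1) n ≫ j P n Y z = 0 := jd (FK P Y) n z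

noncomputable def toAbExt : Z P n Y →ₗ[R] Abelian.Ext X Y n where
  toFun z := P.extMk (j P n Y z) (n+1) rfl (j_d P n Y z)
  map_add' x y := by
    rw [P.add_extMk]; simp
  map_smul' r x := by
    rw [Abelian.Ext.smul_eq_comp_mk₀, P.extMk_comp_mk₀]; simp

noncomputable abbrev F : ModuleCat.{u} R ⥤ (ModuleCat.{u} R)ᵒᵖ :=
  ((linearYoneda R (ModuleCat.{u} R)).obj Y).rightOp

noncomputable def isoD : ((F Y).leftDerived n).obj X ≅ (FK P Y).homology n :=
  P.isoLeftDerivedObj (F Y) n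

noncomputable def toLegHom : ((FK P Y).opcycles n).unop ⟶ (((F Y).leftDerived n).obj X).unop :=
  ((FK P Y).homologyι n).unop ≫ (isoD P n Y).hom.unop

noncomputable def toLegExt : Z P n Y →ₗ[R] ((_root_.Ext R (ModuleCat.{u} R) n).obj (op X)).obj Y :=
  (toLegHom P n Y).hom

lemma toAbExt_surj : Function.Surjective (toAbExt P n Y) := by
  intro e
  obtain ⟨f, hf, rfl⟩ := P.extMk_surjective e (n+1) rfl
  obtain ⟨z, rfl⟩ := jrange (FK P Y) n f hf
  exact ⟨z, rfl⟩

lemma toLegExt_surj : Function.Surjective (toLegExt P n Y) := by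
  have : Epi (toLegHom P n Y) := epi_comp _ _
  exact (ModuleCat.epi_iff_surjective (toLegHom P n Y)).1 this

lemma ker_eq : LinearMap.ker (toAbExt P n Y) = LinearMap.ker (toLegExt P n Y) := by
  ext z
  simp only [LinearMap.mem_ker]
  have h1 : toLegExt P n Y z = 0 ↔ ((FK P Y).homologyι n).unop.hom z = 0 := by
    let i := (isoD P n Y).hom.unop
    have : Function.Injective i.hom := (ModuleCat.mono_iff_injective _).1 inferInstance
    change i.hom (((FK P Y).homologyι n).unop.hom z) = 0 ↔ _
    exact map_eq_zero_iff _ this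
  rw [h1, zker]
  exact extMk_zero_iff P n Y _ (j_d P n Y z)

noncomputable def cmp : ((_root_.Ext R (ModuleCat.{u} R) n).obj (op X)).obj Y ≃ₗ[R]
    Abelian.Ext X Y n :=
  ((toLegExt P n Y).quotKerEquivOfSurjective (toLegExt_surj P n Y)).symm ≪≫ₗ
    (Submodule.quotEquivOfEq _ _ (ker_eq P n Y).symm) ≪≫ₗ
    ((toAbExt P n Y).quotKerEquivOfSurjective (toAbExt_surj P n Y))

lemma cmp_apply (z : Z P n Y) : cmp P n Y (toLegExt P n Y z) = toAbExt P n Y z := by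
  have : ((toLegExt P n Y).quotKerEquivOfSurjective (toLegExt_surj P n Y)).symm
    (toLegExt P n Y z) = Submodule.Quotient.mk z := by
    rw [LinearEquiv.symm_apply_eq]; rfl
  simp only [cmp, LinearEquiv.trans_apply, this]
  rfl

variable {X' : ModuleCat.{u} R} (P' : ProjectiveResolution X') (g : X' ⟶ X)

lemma isoD_nat (φ : P'.complex ⟶ P.complex) (comm : φ.f 0 ≫ P.π.f 0 = P'.π.f 0 ≫ g) :
    ((F Y).leftDerived n).map g ≫ (isoD P n Y).hom = (isoD P' n Y).hom ≫
      HomologicalComplex.homologyMap (((F Y).mapHomologicalComplex (ComplexShape.down ℕ)).map φ) n :=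
  ProjectiveResolution.isoLeftDerivedObj_hom_naturality g P' P φ comm (F Y) n

lemma cmp_nat (e) : cmp P' n Y ((((_root_.Ext R (ModuleCat.{u} R) n).map g.op).app Y).hom e) =
    (Abelian.Ext.mk₀ g).comp (cmp P n Y e) (zero_add n) := by
  obtain ⟨z, rfl⟩ := toLegExt_surj P n Y e
  rw [cmp_apply]
  let φ := ProjectiveResolution.lift g P' P
  have hφ := ProjectiveResolution.lift_commutes g P' P
  let Φ : ProjectiveResolution.Hom P' P g := ⟨φ, by
    have := congr_arg (fun q => q.f 0) hφ
    exact this⟩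
  let ψ := ((F Y).mapHomologicalComplex (ComplexShape.down ℕ)).map φ
  have hm : ((F Y).leftDerived n).map g ≫ (isoD P n Y).hom ≫ (FK P Y).homologyι n =
      ((isoD P' n Y).hom ≫ (FK P' Y).homologyι n) ≫
        HomologicalComplex.opcyclesMap ψ n := by
    rw [← Category.assoc, isoD_nat P n Y P' g φ Φ.hom_f_zero_comp_π_f_zero]
    simp only [Category.assoc]
    congr 1
    exact HomologicalComplex.homologyι_naturality ψ n
  let z' : Z P' n Y := (HomologicalComplex.opcyclesMap ψ n).unop.hom z
  have h1 : (((_root_.Ext R (ModuleCat.{u} R) n).map g.op).app Y).hom (toLegExt P n Y z) =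
      toLegExt P' n Y z' := by
    have := congr_arg (fun q => q.unop.hom z) hm
    exact this
  rw [h1, cmp_apply]
  have h2 : j P' n Y z' = φ.f n ≫ j P n Y z := by
    have := congr_arg (fun q => q.unop.hom z) (HomologicalComplex.p_opcyclesMap ψ n)
    exact this
  have h3 := ProjectiveResolution.mk₀_comp_extMk (j P n Y z) (n+1) rfl (j_d P n Y z) Φ
  refine Eq.trans ?_ h3.symm
  change P'.extMk (j P' n Y z') (n+1) rfl (j_d P' n Y z') = _
  congr 1
end Cmp
end LC

namespace LC
section Stages
open localCohomology
variable {R : Type u} [CommRing R] (J : Ideal R) (i : ℕ) (M : ModuleCat.{u} R)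

abbrev Q (t : ℕ) : ModuleCat.{u} R := ModuleCat.of R (R ⧸ J ^ t)

def proj {t s : ℕ} (h : t ≤ s) : Q J s ⟶ Q J t :=
  (ringModIdeals (idealPowersDiagram J)).map (homOfLE h).op

noncomputable def evD : ℕᵒᵖᵒᵖ ⥤ ModuleCat.{u} R :=
  diagram (idealPowersDiagram J) i ⋙ (evaluation _ _).obj M

noncomputable def evC : Cocone (evD J i M) :=
  ((evaluation _ _).obj M).mapCocone (colimit.cocone (diagram (idealPowersDiagram J) i))

noncomputable def evCC : IsColimit (evC J i M) :=
  isColimitOfPreserves ((evaluation _ _).obj M) (colimit.isColimit (diagram (idealPowersDiagram J) i))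

noncomputable abbrev PR (X : ModuleCat.{u} R) : ProjectiveResolution X := projectiveResolution X

instance presEvD : PreservesColimit (evD J i M) (forget (ModuleCat.{u} R)) := by
  have h1 : PreservesFilteredColimitsOfSize.{0, 0} (forget (ModuleCat.{u} R)) :=
    preservesFilteredColimitsOfSize_shrink.{0, u, 0, u} _
  have : IsFiltered ℕᵒᵖᵒᵖ := inferInstance
  have h2 := h1.preserves_filtered_colimits ℕᵒᵖᵒᵖ
  exact h2.preservesColimit

noncomputable def ce (t : ℕ) : (evD J i M).obj (op (op t)) ≃ₗ[R] Abelian.Ext (Q J t) M i :=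
  cmp (PR (Q J t)) i M

noncomputable def inc (t : ℕ) : (evD J i M).obj (op (op t)) →ₗ[R] (localCohomology J i).obj M :=
  ((evC J i M).ι.app (op (op t))).hom

noncomputable def tr {t s : ℕ} (h : t ≤ s) :
    (evD J i M).obj (op (op t)) →ₗ[R] (evD J i M).obj (op (op s)) :=
  ((evD J i M).map (homOfLE h).op.op).hom

lemma inc_tr {t s : ℕ} (h : t ≤ s) (y) : inc J i M s (tr J i M h y) = inc J i M t y :=
  congr_arg (fun q => q.hom y) ((evC J i M).w (homOfLE h).op.op)

lemma ce_tr {t s : ℕ} (h : t ≤ s) (y) :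
    ce J i M s (tr J i M h y) = (Abelian.Ext.mk₀ (proj J h)).comp (ce J i M t y) (zero_add i) :=
  cmp_nat (PR (Q J t)) i M (PR (Q J s)) (proj J h) y

noncomputable def st (t : ℕ) : Abelian.Ext (Q J t) M i →ₗ[R] (localCohomology J i).obj M :=
  inc J i M t ∘ₗ (ce J i M t).symm.toLinearMap

lemma st_ce (t : ℕ) (y) : st J i M t (ce J i M t y) = inc J i M t y := by
  simp [st]

lemma st_surj (h : (localCohomology J i).obj M) : ∃ t e, st J i M t e = h := by
  obtain ⟨k, y, hy⟩ := Concrete.isColimit_exists_rep _ (evCC J i M) h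
  obtain ⟨⟨t⟩⟩ := k
  refine ⟨t, ce J i M t y, ?_⟩
  rw [st_ce]
  exact hy

lemma st_trans {t s : ℕ} (h : t ≤ s) (e : Abelian.Ext (Q J t) M i) :
    st J i M s ((Abelian.Ext.mk₀ (proj J h)).comp e (zero_add i)) = st J i M t e := by
  obtain ⟨y, rfl⟩ := (ce J i M t).surjective e
  rw [← ce_tr, st_ce, st_ce, inc_tr]

lemma st_zero {t : ℕ} (e : Abelian.Ext (Q J t) M i) (he : st J i M t e = 0) :
    ∃ s, ∃ h : t ≤ s, (Abelian.Ext.mk₀ (proj J h)).comp e (zero_add i) = 0 := by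
  obtain ⟨y, rfl⟩ := (ce J i M t).surjective e
  rw [st_ce] at he
  have h0 : inc J i M t y = inc J i M t 0 := by
    rw [map_zero]; exact he
  obtain ⟨k, f, g, hk⟩ := Concrete.isColimit_exists_of_rep_eq _ (evCC J i M) _ _ h0
  obtain ⟨⟨s⟩⟩ := k
  refine ⟨s, leOfHom f.unop.unop, ?_⟩
  have hk' : tr J i M (leOfHom f.unop.unop) y = tr J i M (leOfHom f.unop.unop) 0 := hk
  rw [← ce_tr, hk', map_zero, map_zero]

lemma st_desc {N : Type u} [AddCommGroup N] [Module R N]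
    (θ : ∀ t, Abelian.Ext (Q J t) M i →ₗ[R] N)
    (hθ : ∀ t s (h : t ≤ s) e, θ s ((Abelian.Ext.mk₀ (proj J h)).comp e (zero_add i)) = θ t e) :
    ∃ Θ : (localCohomology J i).obj M →ₗ[R] N, ∀ t e, Θ (st J i M t e) = θ t e := by
  let c : Cocone (evD J i M) :=
    { pt := ModuleCat.of R N
      ι := { app := fun k => ModuleCat.ofHom (θ k.unop.unop ∘ₗ (ce J i M k.unop.unop).toLinearMap)
             naturality := by
              rintro ⟨⟨t⟩⟩ ⟨⟨s⟩⟩ f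
              have hle : t ≤ s := leOfHom f.unop.unop
              ext y
              have h2 := hθ t s hle (ce J i M t y)
              rw [← ce_tr] at h2
              exact h2 } }
  refine ⟨((evCC J i M).desc c).hom, fun t e => ?_⟩
  obtain ⟨y, rfl⟩ := (ce J i M t).surjective e
  rw [st_ce]
  exact congr_arg (fun q => q.hom y) ((evCC J i M).fac c (op (op t)))

end Stages
end LC

namespace LC
section Math
variable {R : Type u} [CommRing R]

/-- Elements of `I` kill `Ext(R/I, M)`. -/
lemma smul_ext_zero (I : Ideal R) (i : ℕ) (M : ModuleCat.{u} R) (r : R) (hr : r ∈ I)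
    (e : Abelian.Ext (ModuleCat.of R (R ⧸ I)) M i) : r • e = 0 := by
  have h : e = (Abelian.Ext.mk₀ (𝟙 _)).comp e (zero_add i) := by simp
  rw [h, ← Abelian.Ext.smul_comp, ← Abelian.Ext.mk₀_smul]
  have : r • 𝟙 (ModuleCat.of R (R ⧸ I)) = 0 := by
    ext
    change r • (Ideal.Quotient.mk I 1) = 0
    rw [← Ideal.Quotient.mk_eq_mk, ← Submodule.Quotient.mk_smul]
    rw [Submodule.Quotient.mk_eq_zero]
    simpa using hr
  rw [this]; simp

lemma supp_le (a : Ideal R) (i : ℕ) (M : ModuleCat.{u} R) :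
    Module.support R ((localCohomology a i).obj M) ⊆ PrimeSpectrum.zeroLocus (a : Set R) := by
  intro p hp
  rw [Module.mem_support_iff'] at hp
  obtain ⟨h, hh⟩ := hp
  obtain ⟨t, e, rfl⟩ := st_surj a i M h
  rw [PrimeSpectrum.mem_zeroLocus]
  intro r hr
  by_contra hrp
  refine hh (r ^ t) (fun hc => hrp (p.2.mem_of_pow_mem t hc)) ?_
  rw [← map_smul, smul_ext_zero _ _ _ _ (Ideal.pow_mem_pow hr t), map_zero]

abbrev SI (I : Ideal R) : ShortComplex (ModuleCat.{u} R) where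
  X₁ := ModuleCat.of R I
  X₂ := ModuleCat.of R R
  X₃ := ModuleCat.of R (R ⧸ I)
  f := ModuleCat.ofHom (Submodule.subtype I)
  g := ModuleCat.ofHom (Submodule.mkQ I)
  zero := by
    ext y
    exact (Submodule.Quotient.mk_eq_zero I).2 y.2

lemma SI_exact (I : Ideal R) : (SI I).ShortExact where
  exact := by
    rw [ShortComplex.moduleCat_exact_iff]
    intro y hy
    have : y ∈ I := (Submodule.Quotient.mk_eq_zero I).1 hy
    exact ⟨⟨y, this⟩, rfl⟩
  mono_f := (ModuleCat.mono_iff_injective _).2 (Submodule.subtype_injective I)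
  epi_g := (ModuleCat.epi_iff_surjective _).2 (Submodule.mkQ_surjective I)

def incl (J : Ideal R) {t s : ℕ} (h : t ≤ s) :
    ModuleCat.of R (J ^ s : Ideal R) ⟶ ModuleCat.of R (J ^ t : Ideal R) :=
  ModuleCat.ofHom (Submodule.inclusion (Ideal.pow_le_pow_right h))

def SImap (J : Ideal R) {t s : ℕ} (h : t ≤ s) : SI (J ^ s) ⟶ SI (J ^ t) where
  τ₁ := incl J h
  τ₂ := 𝟙 _
  τ₃ := proj J h
  comm₁₂ := rfl
  comm₂₃ := rfl

variable (x : R)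

abbrev J : Ideal R := Ideal.span {x}

lemma mem_J {t : ℕ} {y : R} : y ∈ (J x) ^ t ↔ ∃ r, y = r * x ^ t := by
  rw [J, Ideal.span_singleton_pow, Ideal.mem_span_singleton']
  exact ⟨fun ⟨r, h⟩ => ⟨r, h.symm⟩, fun ⟨r, h⟩ => ⟨r, h.symm⟩⟩

def gen (t : ℕ) : ((J x) ^ t : Ideal R) := ⟨x ^ t, (mem_J x).2 ⟨1, by simp⟩⟩

lemma eq_smul_gen {t : ℕ} (y : ((J x) ^ t : Ideal R)) : ∃ r : R, y = r • gen x t := by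
  obtain ⟨r, hr⟩ := (mem_J x).1 y.2
  exact ⟨r, Subtype.ext hr⟩

lemma hom_gen_ext {t : ℕ} {N : Type u} [AddCommGroup N] [Module R N]
    {f g : ((J x) ^ t : Ideal R) →ₗ[R] N} (h : f (gen x t) = g (gen x t)) : f = g := by
  ext y
  obtain ⟨r, hr⟩ := eq_smul_gen x y
  rw [hr, map_smul, map_smul, h]

lemma exists_hom {t : ℕ} {N : Type u} [AddCommGroup N] [Module R N] (c : N)
    (hc : ∀ r : R, r * x ^ t = 0 → r • c = 0) :
    ∃ f : ((J x) ^ t : Ideal R) →ₗ[R] N, f (gen x t) = c := by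
  choose ρ hρ using fun y : ((J x) ^ t : Ideal R) => eq_smul_gen x y
  have key : ∀ (r : R) (y : ((J x) ^ t : Ideal R)), y = r • gen x t → ρ y • c = r • c := by
    intro r y hy
    rw [← sub_eq_zero, ← sub_smul]
    apply hc
    have : (ρ y - r) • gen x t = 0 := by rw [sub_smul, ← hρ, ← hy, sub_self]
    exact congr_arg Subtype.val this
  refine ⟨⟨⟨fun y => ρ y • c, ?_⟩, ?_⟩, ?_⟩
  · intro y z
    rw [← add_smul]
    apply key
    rw [add_smul, ← hρ, ← hρ]
  · intro r y
    change ρ (r • y) • c = r • (ρ y • c)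
    rw [← mul_smul]
    apply key
    rw [mul_smul, ← hρ]
  · change ρ _ • c = c
    rw [key 1 _ (by simp), one_smul]

lemma exists_stable [IsNoetherianRing R] :
    ∃ m : ℕ, ∀ k r, r * x ^ (m + k) = 0 → r * x ^ m = 0 := by
  let f : ℕ →o Submodule R R :=
    ⟨fun k => LinearMap.ker (LinearMap.toSpanSingleton R R (x ^ k)), by
      intro a b hab r hr
      simp only [LinearMap.mem_ker, LinearMap.toSpanSingleton_apply, smul_eq_mul] at hr ⊢
      obtain ⟨c, rfl⟩ := Nat.exists_eq_add_of_le hab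
      rw [pow_add, ← mul_assoc, hr, zero_mul]⟩
  obtain ⟨m, hm⟩ := monotone_stabilizes_iff_noetherian.2 (inferInstance : IsNoetherian R R) f
  refine ⟨m, fun k r h => ?_⟩
  have h1 : r ∈ f (m + k) := h
  rw [← hm (m + k) (by omega)] at h1
  exact h1

instance projR : Projective (ModuleCat.of R R) := by
  rw [← IsProjective.iff_projective]; infer_instance

lemma ext_R_zero (M : ModuleCat.{u} R) (n : ℕ) (hn : n ≠ 0) (e : Abelian.Ext (ModuleCat.of R R) M n) :
    e = 0 := by
  obtain ⟨k, rfl⟩ := Nat.exists_eq_succ_of_ne_zero hn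
  exact Abelian.Ext.eq_zero_of_projective e

lemma proj_extClass (J : Ideal R) (M : ModuleCat.{u} R) {t s : ℕ} (h : t ≤ s) {n k : ℕ}
    (hk : 1 + n = k)
    (e : Abelian.Ext (ModuleCat.of R (J ^ t : Ideal R)) M n) :
    (Abelian.Ext.mk₀ (proj J h)).comp ((SI_exact (J ^ t)).extClass.comp e hk) (zero_add k) =
    (SI_exact (J ^ s)).extClass.comp ((Abelian.Ext.mk₀ (incl J h)).comp e (zero_add n)) hk := by
  have := ShortComplex.ShortExact.extClass_naturality (SI_exact (J ^ s)) (SI_exact (J ^ t)) (SImap J h)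
  rw [← Abelian.Ext.comp_assoc (a₁₂ := 1) _ _ _ (by lia) (by lia) (by lia)]
  rw [← Abelian.Ext.comp_assoc (a₁₂ := 1) _ _ _ (by lia) (by lia) (by lia)]
  congr 1
  exact this.symm

lemma vanish [IsNoetherianRing R] (M : ModuleCat.{u} R) (i : ℕ) (hi : 2 ≤ i) :
    Subsingleton ((localCohomology (J x) i).obj M) := by
  refine subsingleton_of_forall_eq 0 fun h => ?_
  obtain ⟨t, e, rfl⟩ := st_surj (J x) i M h
  obtain ⟨n, rfl⟩ := Nat.exists_eq_add_of_le hi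
  obtain ⟨m, hm⟩ := exists_stable x
  have hk : 1 + (1 + n) = 2 + n := by omega
  obtain ⟨e1, rfl⟩ := Abelian.Ext.contravariant_sequence_exact₃ (SI_exact ((J x) ^ t)) M e
    (ext_R_zero M _ (by omega) _) hk
  have hle : t ≤ t + m := by omega
  rw [← st_trans (J x) (2+n) M hle, proj_extClass]
  obtain ⟨w, hw⟩ := exists_hom x (t := t + m) (x ^ m) (fun r hr => by
    rw [smul_eq_mul]; exact hm t r (by rwa [add_comm m t]))
  have hf : incl (J x) hle = (ModuleCat.ofHom w : _ ⟶ ModuleCat.of R R) ≫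
      ModuleCat.ofHom (LinearMap.toSpanSingleton R ((J x) ^ t : Ideal R) (gen x t)) := by
    apply ModuleCat.hom_ext
    apply hom_gen_ext
    apply Subtype.ext
    simp only [ModuleCat.hom_comp, ModuleCat.hom_ofHom, LinearMap.comp_apply, hw]
    change x ^ (t + m) = x ^ m * x ^ t
    ring
  rw [hf, ← Abelian.Ext.mk₀_comp_mk₀_assoc, ext_R_zero M _ (by omega) ((Abelian.Ext.mk₀ _).comp e1 _)]
  simp

lemma fin_zero [IsNoetherianRing R] (J : Ideal R) (M : ModuleCat.{u} R) [Module.Finite R M] :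
    Module.Finite R ((localCohomology J 0).obj M) := by
  let ev : ∀ t, (Q J t →ₗ[R] M) →ₗ[R] M := fun t => LinearMap.applyₗ (Submodule.Quotient.mk 1)
  let θ : ∀ t, Abelian.Ext (Q J t) M 0 →ₗ[R] M := fun t =>
    ev t ∘ₗ (Abelian.Ext.linearEquiv₀.trans ModuleCat.homLinearEquiv).toLinearMap
  have hmk : ∀ t (f : Q J t ⟶ M), θ t (Abelian.Ext.mk₀ f) = f.hom (Submodule.Quotient.mk 1) := by
    intro t f
    have : (Abelian.Ext.linearEquiv₀ (R := R)) (Abelian.Ext.mk₀ f) = f := by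
      rw [← Abelian.Ext.linearEquiv₀_symm_apply (R := R), LinearEquiv.apply_symm_apply]
    simp only [θ, LinearMap.comp_apply, LinearEquiv.coe_coe, LinearEquiv.trans_apply, this]
    rfl
  have hsur : ∀ t (e : Abelian.Ext (Q J t) M 0), ∃ f, Abelian.Ext.mk₀ f = e := fun t e =>
    ⟨_, Abelian.Ext.mk₀_linearEquiv₀_apply (R := R) e⟩
  obtain ⟨Θ, hΘ⟩ := st_desc J 0 M θ (by
    intro t s h e
    obtain ⟨f, rfl⟩ := hsur t e
    rw [Abelian.Ext.mk₀_comp_mk₀, hmk, hmk]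
    rfl)
  refine Module.Finite.of_injective Θ ?_
  rw [← LinearMap.ker_eq_bot, LinearMap.ker_eq_bot']
  intro h hh
  obtain ⟨t, e, rfl⟩ := st_surj J 0 M h
  obtain ⟨f, rfl⟩ := hsur t e
  rw [hΘ, hmk] at hh
  have : f = 0 := by
    ext
    exact hh
  rw [this]; simp

end Math
end LC

namespace LC
section HOne
variable {R : Type u} [CommRing R] (x : R) (M : ModuleCat.{u} R)

abbrev Mx : Type u := LocalizedModule (Submonoid.powers x) M

noncomputable abbrev lm : M →ₗ[R] Mx x M := LocalizedModule.mkLinearMap (Submonoid.powers x) M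

abbrev pw (t : ℕ) : Submonoid.powers x := ⟨x ^ t, t, rfl⟩

abbrev NN : Type u := Mx x M ⧸ LinearMap.range (lm x M)

noncomputable def sMap (t : ℕ) : (((J x) ^ t : Ideal R) →ₗ[R] M) →ₗ[R]
    Abelian.Ext (Q (J x) t) M 1 :=
  (SI_exact ((J x) ^ t)).extClass.precompOfLinear R M (add_zero 1) ∘ₗ
    (Abelian.Ext.linearEquiv₀.trans (ModuleCat.homLinearEquiv
      (M := ModuleCat.of R ((J x) ^ t : Ideal R)) (N := M) (S := R))).symm.toLinearMap

lemma sMap_apply (t : ℕ) (f : ((J x) ^ t : Ideal R) →ₗ[R] M) :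
    sMap x M t f = (SI_exact ((J x) ^ t)).extClass.comp
      (Abelian.Ext.mk₀ (ModuleCat.ofHom f)) (add_zero 1) := rfl

lemma sMap_surj (t : ℕ) : Function.Surjective (sMap x M t) := by
  intro e
  obtain ⟨e1, rfl⟩ := Abelian.Ext.contravariant_sequence_exact₃ (SI_exact ((J x) ^ t)) M e
    (ext_R_zero M _ (by omega) _) (add_zero 1)
  refine ⟨(Abelian.Ext.linearEquiv₀ (R := R) e1).hom, ?_⟩
  rw [sMap_apply, ModuleCat.ofHom_hom, Abelian.Ext.mk₀_linearEquiv₀_apply]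

lemma sMap_zero_iff (t : ℕ) (f : ((J x) ^ t : Ideal R) →ₗ[R] M) :
    sMap x M t f = 0 ↔ ∃ m : M, f (gen x t) = x ^ t • m := by
  rw [sMap_apply]
  constructor
  · intro h
    obtain ⟨e, he⟩ := Abelian.Ext.contravariant_sequence_exact₁ (SI_exact ((J x) ^ t)) M _ _ h
    rw [← Abelian.Ext.mk₀_linearEquiv₀_apply (R := R) e, Abelian.Ext.mk₀_comp_mk₀] at he
    have h2 := (Abelian.Ext.mk₀_bijective _ _).1 he
    let g := Abelian.Ext.linearEquiv₀ (R := R) e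
    have h3 := congr_arg (fun q => q.hom (gen x t)) h2
    refine ⟨g.hom (1 : R), ?_⟩
    rw [← map_smul]
    refine Eq.trans h3.symm ?_
    change g.hom (x ^ t) = g.hom (x ^ t * 1)
    rw [mul_one]
  · rintro ⟨m, hm⟩
    have : ModuleCat.ofHom f = (SI ((J x) ^ t)).f ≫
        ModuleCat.ofHom (LinearMap.toSpanSingleton R M m) := by
      apply ModuleCat.hom_ext
      apply hom_gen_ext
      exact hm
    rw [this, ← Abelian.Ext.mk₀_comp_mk₀]
    exact ShortComplex.ShortExact.extClass_comp_assoc _ _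

lemma sMap_proj {t s : ℕ} (h : t ≤ s) (f : ((J x) ^ t : Ideal R) →ₗ[R] M) :
    (Abelian.Ext.mk₀ (proj (J x) h)).comp (sMap x M t f) (zero_add 1) =
      sMap x M s (f ∘ₗ (incl (J x) h).hom) := by
  rw [sMap_apply, proj_extClass, Abelian.Ext.mk₀_comp_mk₀]
  rfl

lemma incl_gen {t s : ℕ} (h : t ≤ s) :
    (incl (J x) h).hom (gen x s) = x ^ (s - t) • gen x t := by
  apply Subtype.ext
  change x ^ s = x ^ (s - t) * x ^ t
  rw [← pow_add]; congr 1; omega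

noncomputable def hMap (t : ℕ) : (((J x) ^ t : Ideal R) →ₗ[R] M) →ₗ[R] NN x M :=
  (LinearMap.range (lm x M)).mkQ ∘ₗ (LocalizedModule.divBy (pw x t)) ∘ₗ lm x M ∘ₗ
    LinearMap.applyₗ (gen x t)

lemma hMap_apply (t : ℕ) (f : ((J x) ^ t : Ideal R) →ₗ[R] M) :
    hMap x M t f = Submodule.Quotient.mk (LocalizedModule.mk (f (gen x t)) (pw x t)) := by
  change Submodule.Quotient.mk (LocalizedModule.mk (f (gen x t)) (1 * pw x t)) = _
  rw [one_mul]

lemma hMap_zero_iff (t : ℕ) (f : ((J x) ^ t : Ideal R) →ₗ[R] M) :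
    hMap x M t f = 0 ↔ ∃ m k, x ^ k • f (gen x t) = x ^ (k + t) • m := by
  rw [hMap_apply, Submodule.Quotient.mk_eq_zero, LinearMap.mem_range]
  simp only [LocalizedModule.mkLinearMap_apply, LocalizedModule.mk_eq]
  constructor
  · rintro ⟨m, ⟨_, k, rfl⟩, h⟩
    refine ⟨m, k, ?_⟩
    simp only [Submonoid.smul_def, one_smul] at h
    rw [pow_add, mul_smul]
    exact h.symm
  · rintro ⟨m, k, h⟩
    refine ⟨m, ⟨_, k, rfl⟩, ?_⟩
    simp only [Submonoid.smul_def, one_smul]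
    rw [pow_add, mul_smul] at h
    exact h.symm

lemma h1_equiv [IsNoetherianRing R] :
    Nonempty ((localCohomology (J x) 1).obj M ≃ₗ[R] NN x M) := by
  have hker : ∀ t, LinearMap.ker (sMap x M t) ≤ LinearMap.ker (hMap x M t) := by
    intro t f hf
    rw [LinearMap.mem_ker, sMap_zero_iff] at hf
    rw [LinearMap.mem_ker, hMap_zero_iff]
    obtain ⟨m, hm⟩ := hf
    exact ⟨m, 0, by simpa using hm⟩
  let θ : ∀ t, Abelian.Ext (Q (J x) t) M 1 →ₗ[R] NN x M := fun t =>
    (LinearMap.ker (sMap x M t)).liftQ (hMap x M t) (hker t) ∘ₗ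
      ((sMap x M t).quotKerEquivOfSurjective (sMap_surj x M t)).symm.toLinearMap
  have hθ : ∀ t f, θ t (sMap x M t f) = hMap x M t f := by
    intro t f
    have : ((sMap x M t).quotKerEquivOfSurjective (sMap_surj x M t)).symm
      (sMap x M t f) = Submodule.Quotient.mk f := by
      rw [LinearEquiv.symm_apply_eq]; rfl
    simp only [θ, LinearMap.comp_apply, LinearEquiv.coe_coe, this]
    rfl
  obtain ⟨Θ, hΘ⟩ := st_desc (J x) 1 M θ (by
    intro t s h e
    obtain ⟨f, rfl⟩ := sMap_surj x M t e
    rw [sMap_proj, hθ, hθ, hMap_apply, hMap_apply, LinearMap.comp_apply, incl_gen, map_smul]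
    congr 1
    rw [LocalizedModule.mk_eq]
    refine ⟨1, ?_⟩
    simp only [Submonoid.smul_def, one_smul]
    rw [smul_smul, ← pow_add]
    congr 2; omega)
  refine ⟨LinearEquiv.ofBijective Θ ⟨?_, ?_⟩⟩
  · rw [← LinearMap.ker_eq_bot, LinearMap.ker_eq_bot']
    intro h hh
    obtain ⟨t, e, rfl⟩ := st_surj (J x) 1 M h
    obtain ⟨f, rfl⟩ := sMap_surj x M t e
    rw [hΘ, hθ, hMap_zero_iff] at hh
    obtain ⟨m, k, hm⟩ := hh
    have hle : t ≤ k + t := by omega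
    rw [← st_trans (J x) 1 M hle, sMap_proj]
    have : sMap x M (k + t) (f ∘ₗ (incl (J x) hle).hom) = 0 := by
      rw [sMap_zero_iff]
      refine ⟨m, ?_⟩
      rw [LinearMap.comp_apply, incl_gen, map_smul, ← hm]
      simp
    rw [this, map_zero]
  · intro y
    obtain ⟨y, rfl⟩ := Submodule.Quotient.mk_surjective _ y
    induction y using LocalizedModule.induction_on with
    | h c s =>
    obtain ⟨_, k, rfl⟩ := s
    obtain ⟨m, hm⟩ := exists_stable x
    obtain ⟨f, hf⟩ := exists_hom x (t := m + k) (x ^ m • c) (fun r hr => by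
      rw [smul_smul, hm k r hr, zero_smul])
    refine ⟨st (J x) 1 M (m + k) (sMap x M (m + k) f), ?_⟩
    rw [hΘ, hθ, hMap_apply, hf]
    congr 1
    rw [LocalizedModule.mk_eq]
    refine ⟨1, ?_⟩
    simp only [Submonoid.smul_def, one_smul]
    rw [smul_smul, ← pow_add, add_comm]

lemma ext_Mx_zero (a : Ideal R) (k : ℕ) (hk : x ^ k ∈ a) (i : ℕ)
    (e : Abelian.Ext (ModuleCat.of R (R ⧸ a)) (ModuleCat.of R (Mx x M)) i) : e = 0 := by
  have h0 := smul_ext_zero a i _ _ hk e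
  rw [Abelian.Ext.smul_eq_comp_mk₀] at h0
  have h1 : (x ^ k • 𝟙 (ModuleCat.of R (Mx x M))) ≫
      ModuleCat.ofHom (LocalizedModule.divBy (M := M) (pw x k)) = 𝟙 _ := by
    ext y
    change LocalizedModule.divBy (M := M) (pw x k) (x ^ k • y) = y
    exact LocalizedModule.divBy_mul_by (pw x k) y
  have h2 : e = (e.comp (Abelian.Ext.mk₀ (x ^ k • 𝟙 (ModuleCat.of R (Mx x M)))) (add_zero i)).comp
      (Abelian.Ext.mk₀ (ModuleCat.ofHom (LocalizedModule.divBy (M := M) (pw x k)))) (add_zero i) := by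
    rw [Abelian.Ext.comp_assoc_of_third_deg_zero, Abelian.Ext.mk₀_comp_mk₀, h1]
    simp
  rw [h2, h0]; simp

lemma fin_one [IsNoetherianRing R] [Module.Finite R M] (a : Ideal R) (k : ℕ) (hk : x ^ k ∈ a)
    (i : ℕ) (H : ModuleCat.{u} R) (eq : H ≃ₗ[R] NN x M) :
    Module.Finite R (Abelian.Ext (ModuleCat.of R (R ⧸ a)) H i) := by
  let S : ShortComplex (ModuleCat.{u} R) :=
    { X₁ := ModuleCat.of R (LinearMap.range (lm x M))
      X₂ := ModuleCat.of R (Mx x M)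
      X₃ := H
      f := ModuleCat.ofHom (Submodule.subtype _)
      g := ModuleCat.ofHom (eq.symm.toLinearMap ∘ₗ (LinearMap.range (lm x M)).mkQ)
      zero := by
        ext y
        change eq.symm (Submodule.Quotient.mk y.1) = 0
        rw [(Submodule.Quotient.mk_eq_zero _).2 y.2, map_zero] }
  have hS : S.ShortExact :=
    { exact := by
        rw [ShortComplex.moduleCat_exact_iff]
        intro y hy
        have h1 : eq.symm (Submodule.Quotient.mk y) = 0 := hy
        rw [LinearEquiv.map_eq_zero_iff, Submodule.Quotient.mk_eq_zero] at h1
        exact ⟨⟨y, h1⟩, rfl⟩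
      mono_f := (ModuleCat.mono_iff_injective _).2 (Submodule.subtype_injective _)
      epi_g := (ModuleCat.epi_iff_surjective _).2
        (eq.symm.surjective.comp (Submodule.mkQ_surjective _)) }
  have : Module.Finite R S.X₁ := Module.Finite.range (lm x M)
  have hfin : Module.Finite R (Abelian.Ext (ModuleCat.of R (R ⧸ a)) S.X₁ (i + 1)) :=
    inferInstance
  refine Module.Finite.of_injective
    (hS.extClass.postcompOfLinear R (ModuleCat.of R (R ⧸ a)) (rfl : i + 1 = i + 1)) ?_
  rw [← LinearMap.ker_eq_bot, LinearMap.ker_eq_bot']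
  intro e he
  obtain ⟨e2, rfl⟩ := Abelian.Ext.covariant_sequence_exact₃ _ hS e rfl he
  rw [ext_Mx_zero x M a k hk i e2]; simp

end HOne
end LC

theorem stmt14 {R : Type u} [CommRing R] [IsNoetherianRing R] (a : Ideal R)
    (hara : ∃ s : Finset R, s.card ≤ 1 ∧ (Ideal.span (s : Set R)).radical = a.radical) :
    ∀ (M : ModuleCat.{u} R), Module.Finite R M →
      IsCofinite a ((localCohomology a 0).obj M) ∧
      IsCofinite a ((localCohomology a 1).obj M) ∧
      ∀ i : ℕ, 2 ≤ i → Subsingleton ((localCohomology a i).obj M) := by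
  intro M hM
  obtain ⟨x, hx⟩ : ∃ x : R, a.radical = (LC.J x).radical := by
    obtain ⟨s, hs, hr⟩ := hara
    rcases Nat.le_one_iff_eq_zero_or_eq_one.1 hs with h | h
    · rw [Finset.card_eq_zero] at h
      subst h
      refine ⟨0, ?_⟩
      rw [← hr]; simp [LC.J]
    · obtain ⟨x, rfl⟩ := Finset.card_eq_one.1 h
      refine ⟨x, ?_⟩
      rw [← hr]; simp [LC.J]
  have iso : ∀ i, (localCohomology a i).obj M ≃ₗ[R] (localCohomology (LC.J x) i).obj M :=
    fun i => ((localCohomology.isoOfSameRadical hx i).app M).toLinearEquiv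
  refine ⟨⟨LC.supp_le a 0 M, fun i => ?_⟩, ⟨LC.supp_le a 1 M, fun i => ?_⟩, fun i hi => ?_⟩
  · have := LC.fin_zero a M
    exact Module.Finite.equiv (LC.cmp (LC.PR (ModuleCat.of R (R ⧸ a))) i
      ((localCohomology a 0).obj M)).symm
  · obtain ⟨k, hk⟩ : x ∈ a.radical := by
      rw [hx]; exact Ideal.le_radical (Ideal.mem_span_singleton_self x)
    obtain ⟨e⟩ := LC.h1_equiv x M
    have := LC.fin_one x M a k hk i ((localCohomology a 1).obj M) ((iso 1).trans e)
    exact Module.Finite.equiv (LC.cmp (LC.PR (ModuleCat.of R (R ⧸ a))) i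
      ((localCohomology a 1).obj M)).symm
  · have := LC.vanish x M i hi
    exact (iso i).toEquiv.subsingleton
end
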